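/- arXiv:1209.4558 — 3 statements merged into one kernel-verified Lean document; each statement's English description precedes it below -/
import Mathlib

section
/- For the D_n^{(1)} crystal B^{1,s}, wt(ẽ_i b) = wt(b) + α_i whenever ẽ_i b ≠ 0, and wt(f̃_i b) = wt(b) − α_i whenever f̃_i b ≠ 0, for all i ∈ {0,1,…,n}. -/
open scoped Classical


/-- Coordinates `((x₁,…,x_M),(x̄₁,…,x̄_M))` (with `M = m+4`) for the
`D_M^{(1)}`-crystal `B^{1,s}`. -/
abbrev DV (m : ℕ) : Type := (Fin (m + 4) → ℤ) × (Fin (m + 4) → ℤ)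

/-- Membership in `B^{1,s}`: nonnegative coordinates summing to `s`,
with `x_M = 0` or `x̄_M = 0`. -/
def DMem (m s : ℕ) (v : DV m) : Prop :=
  (∀ j, 0 ≤ v.1 j) ∧ (∀ j, 0 ≤ v.2 j) ∧
  ((Finset.univ.sum v.1) + (Finset.univ.sum v.2) = (s : ℤ)) ∧
  (v.1 ⟨m + 3, by omega⟩ = 0 ∨ v.2 ⟨m + 3, by omega⟩ = 0)

/-- Add `d` to the `j`-th coordinate. -/
noncomputable def bump {m : ℕ} (f : Fin (m + 4) → ℤ) (j : Fin (m + 4)) (d : ℤ) :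
    Fin (m + 4) → ℤ :=
  Function.update f j (f j + d)

/-- The raw coordinate formula for `ẽ_i` on `B^{1,s}` (index `0 ≤ i ≤ M`). -/
noncomputable def eRaw (m : ℕ) (i : ℕ) (v : DV m) : DV m :=
  if i = 0 then
    (if v.2 1 < v.1 1 then (bump v.1 1 (-1), bump v.2 0 1) else (bump v.1 0 (-1), bump v.2 1 1))
  else if h : i ≤ m + 3 then
    (if v.2 ⟨i, by omega⟩ < v.1 ⟨i, by omega⟩ then
       (bump (bump v.1 ⟨i - 1, by omega⟩ 1) ⟨i, by omega⟩ (-1), v.2)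
     else (v.1, bump (bump v.2 ⟨i, by omega⟩ 1) ⟨i - 1, by omega⟩ (-1)))
  else
    (if v.2 ⟨m + 3, by omega⟩ = 0 then
       (bump v.1 ⟨m + 3, by omega⟩ 1, bump v.2 ⟨m + 2, by omega⟩ (-1))
     else (bump v.1 ⟨m + 2, by omega⟩ 1, bump v.2 ⟨m + 3, by omega⟩ (-1)))

/-- The raw coordinate formula for `f̃_i` on `B^{1,s}`. -/
noncomputable def fRaw (m : ℕ) (i : ℕ) (v : DV m) : DV m :=
  if i = 0 then
    (if v.2 1 ≤ v.1 1 then (bump v.1 1 1, bump v.2 0 (-1)) else (bump v.1 0 1, bump v.2 1 (-1)))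
  else if h : i ≤ m + 3 then
    (if v.2 ⟨i, by omega⟩ ≤ v.1 ⟨i, by omega⟩ then
       (bump (bump v.1 ⟨i - 1, by omega⟩ (-1)) ⟨i, by omega⟩ 1, v.2)
     else (v.1, bump (bump v.2 ⟨i, by omega⟩ (-1)) ⟨i - 1, by omega⟩ 1))
  else
    (if 0 < v.1 ⟨m + 3, by omega⟩ then
       (bump v.1 ⟨m + 3, by omega⟩ (-1), bump v.2 ⟨m + 2, by omega⟩ 1)
     else (bump v.1 ⟨m + 2, by omega⟩ (-1), bump v.2 ⟨m + 3, by omega⟩ 1))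

/-- `ẽ_i` on `B^{1,s}`; the result is `0` (i.e. `none`) if it leaves the set. -/
noncomputable def eD (m s : ℕ) (i : ℕ) (v : DV m) : Option (DV m) :=
  if DMem m s (eRaw m i v) then some (eRaw m i v) else none

/-- `f̃_i` on `B^{1,s}`; the result is `0` (i.e. `none`) if it leaves the set. -/
noncomputable def fD (m s : ℕ) (i : ℕ) (v : DV m) : Option (DV m) :=
  if DMem m s (fRaw m i v) then some (fRaw m i v) else none

/-- `ε_i` on `B^{1,s}`. -/
noncomputable def epsD (m : ℕ) (i : ℕ) (v : DV m) : ℤ :=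
  if i = 0 then v.1 0 + max (v.1 1 - v.2 1) 0
  else if h : i ≤ m + 2 then
    v.2 ⟨i - 1, by omega⟩ + max (v.1 ⟨i, by omega⟩ - v.2 ⟨i, by omega⟩) 0
  else if i = m + 3 then v.2 ⟨m + 2, by omega⟩ + v.1 ⟨m + 3, by omega⟩
  else v.2 ⟨m + 2, by omega⟩ + v.2 ⟨m + 3, by omega⟩

/-- `φ_i` on `B^{1,s}`. -/
noncomputable def phiD (m : ℕ) (i : ℕ) (v : DV m) : ℤ :=
  if i = 0 then v.2 0 + max (v.2 1 - v.1 1) 0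
  else if h : i ≤ m + 2 then
    v.1 ⟨i - 1, by omega⟩ + max (v.2 ⟨i, by omega⟩ - v.1 ⟨i, by omega⟩) 0
  else if i = m + 3 then v.1 ⟨m + 2, by omega⟩ + v.2 ⟨m + 3, by omega⟩
  else v.1 ⟨m + 2, by omega⟩ + v.1 ⟨m + 3, by omega⟩

/-- The weight of an element of `B^{1,s}`, written in the basis of fundamental weights
`Λ₀, …, Λ_M` (working modulo the null root `δ`). -/
noncomputable def wtD (m : ℕ) (v : DV m) : Fin (m + 5) → ℤ := fun j =>
  if j.val = 0 then v.2 0 - v.1 0 + v.2 1 - v.1 1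
  else if h : j.val ≤ m + 2 then
    v.1 ⟨j.val - 1, by omega⟩ - v.2 ⟨j.val - 1, by omega⟩ +
      v.2 ⟨j.val, by omega⟩ - v.1 ⟨j.val, by omega⟩
  else if j.val = m + 3 then
    v.1 ⟨m + 2, by omega⟩ - v.2 ⟨m + 2, by omega⟩ +
      v.2 ⟨m + 3, by omega⟩ - v.1 ⟨m + 3, by omega⟩
  else
    v.1 ⟨m + 2, by omega⟩ - v.2 ⟨m + 2, by omega⟩ +
      v.1 ⟨m + 3, by omega⟩ - v.2 ⟨m + 3, by omega⟩

/-- Adjacency in the Dynkin diagram of `D_n^{(1)}` (here `n = m+4`):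
node `0` and node `1` are both attached to node `2`, nodes `2,…,n−2` form a chain,
and nodes `n−1` and `n` are both attached to node `n−2`. -/
def adjD (m : ℕ) (i j : ℕ) : Prop :=
  (i = 0 ∧ j = 2) ∨ (i = 2 ∧ j = 0) ∨ (i = 1 ∧ j = 2) ∨ (i = 2 ∧ j = 1) ∨
  (i + 1 = j ∧ 2 ≤ i ∧ j ≤ m + 3) ∨ (j + 1 = i ∧ 2 ≤ j ∧ i ≤ m + 3) ∨
  (i = m + 2 ∧ j = m + 4) ∨ (i = m + 4 ∧ j = m + 2)

/-- The Cartan matrix of `D_n^{(1)}` (here `n = m+4`). -/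
noncomputable def cartanD (m : ℕ) (i j : Fin (m + 5)) : ℤ :=
  if i = j then 2 else if adjD m i.val j.val then -1 else 0

/-- The simple root `α_i` of `D_n^{(1)}`, written in the basis of fundamental weights
(working modulo the null root `δ`): `α_i = Σ_j a_{ji} Λ_j`. -/
noncomputable def alphaD (m : ℕ) (i : Fin (m + 5)) : Fin (m + 5) → ℤ :=
  fun j => cartanD m j i

/-- Pointwise value of `bump`. -/
theorem bump_apply_val {m : ℕ} (f : Fin (m + 4) → ℤ) (j : Fin (m + 4)) (d : ℤ) (k : Fin (m + 4)) :
    bump f j d k = f k + (if k.val = j.val then d else 0) := by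
  unfold bump
  by_cases h : k = j
  · subst h; simp
  · have h' : k.val ≠ j.val := fun e => h (Fin.ext e)
    simp [Function.update_of_ne h, h']

/-- The simple root in the orthogonal coordinates `x - x̄`. -/
def rootCoord (m i k : ℕ) : ℤ :=
  if i = 0 then (if k ≤ 1 then -1 else 0)
  else if i ≤ m + 3 then (if k + 1 = i then 1 else if k = i then -1 else 0)
  else (if k = m + 2 then 1 else if k = m + 3 then 1 else 0)

theorem eRaw_diff (m i : ℕ) (v : DV m) (k : Fin (m + 4)) :
    (eRaw m i v).1 k - (eRaw m i v).2 k = v.1 k - v.2 k + rootCoord m i k.val := by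
  obtain ⟨k, hk⟩ := k
  have h0 : (0 : Fin (m + 4)).val = 0 := rfl
  have h1 : (1 : Fin (m + 4)).val = 1 := rfl
  unfold eRaw rootCoord
  by_cases hi0 : i = 0
  · simp only [hi0, if_true]
    split_ifs <;> simp only [bump_apply_val, h0, h1] <;> split_ifs <;> omega
  · by_cases hi1 : i ≤ m + 3
    · simp only [hi0, hi1, if_true, if_false, dif_pos]
      split_ifs <;> simp only [bump_apply_val] <;> split_ifs <;> omega
    · simp only [hi0, hi1, if_false, dif_neg, not_false_eq_true]
      split_ifs <;> simp only [bump_apply_val] <;> split_ifs <;> omega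

theorem fRaw_diff (m i : ℕ) (v : DV m) (k : Fin (m + 4)) :
    (fRaw m i v).1 k - (fRaw m i v).2 k = v.1 k - v.2 k - rootCoord m i k.val := by
  obtain ⟨k, hk⟩ := k
  have h0 : (0 : Fin (m + 4)).val = 0 := rfl
  have h1 : (1 : Fin (m + 4)).val = 1 := rfl
  unfold fRaw rootCoord
  by_cases hi0 : i = 0
  · simp only [hi0, if_true]
    split_ifs <;> simp only [bump_apply_val, h0, h1] <;> split_ifs <;> omega
  · by_cases hi1 : i ≤ m + 3
    · simp only [hi0, hi1, if_true, if_false, dif_pos]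
      split_ifs <;> simp only [bump_apply_val] <;> split_ifs <;> omega
    · simp only [hi0, hi1, if_false, dif_neg, not_false_eq_true]
      split_ifs <;> simp only [bump_apply_val] <;> split_ifs <;> omega

theorem adjD_zero (m j : ℕ) : adjD m j 0 ↔ j = 2 := by
  unfold adjD
  constructor
  · rintro (h | h | h | h | h | h | h | h) <;> omega
  · intro h; exact Or.inr (Or.inl ⟨h, rfl⟩)

theorem adjD_last (m j : ℕ) : adjD m j (m + 4) ↔ j = m + 2 := by
  unfold adjD
  constructor
  · rintro (h | h | h | h | h | h | h | h) <;> omega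
  · intro h; simp [h]

theorem adjD_one (m j : ℕ) : adjD m j 1 ↔ j = 2 := by
  unfold adjD
  constructor
  · rintro (h | h | h | h | h | h | h | h) <;> omega
  · intro h; simp [h]

theorem adjD_two (m j : ℕ) : adjD m j 2 ↔ (j = 0 ∨ j = 1 ∨ j = 3 ∨ (m = 0 ∧ j = 4)) := by
  unfold adjD
  constructor
  · rintro (h | h | h | h | h | h | h | h) <;> omega
  · rintro (h | h | h | ⟨h, h'⟩)
    · simp [h]
    · simp [h]
    · simp [h]
    · simp [h, h']

theorem adjD_mid (m i j : ℕ) (h3 : 3 ≤ i) (h : i ≤ m + 3) :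
    adjD m j i ↔ (j + 1 = i ∨ (j = i + 1 ∧ i ≤ m + 2) ∨ (i = m + 2 ∧ j = m + 4)) := by
  unfold adjD
  constructor
  · rintro (h | h | h | h | h | h | h | h) <;> omega
  · rintro (h1 | ⟨h1, h2⟩ | ⟨h1, h2⟩)
    · exact Or.inr (Or.inr (Or.inr (Or.inr (Or.inl (by omega)))))
    · exact Or.inr (Or.inr (Or.inr (Or.inr (Or.inr (Or.inl (by omega))))))
    · simp [h1, h2]

set_option maxHeartbeats 2000000 in
/-- The simple root `α_i` computed from its orthogonal coordinates. -/
theorem alphaD_eq (m : ℕ) (i j : Fin (m + 5)) :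
    alphaD m i j =
      if j.val = 0 then - rootCoord m i 0 - rootCoord m i 1
      else if j.val ≤ m + 2 then rootCoord m i (j.val - 1) - rootCoord m i j.val
      else if j.val = m + 3 then rootCoord m i (m + 2) - rootCoord m i (m + 3)
      else rootCoord m i (m + 2) + rootCoord m i (m + 3) := by
  obtain ⟨i, hi⟩ := i
  obtain ⟨j, hj⟩ := j
  simp only [alphaD, cartanD, Fin.mk.injEq]
  by_cases hi0 : i = 0
  · have hA := adjD_zero m j
    subst hi0
    simp only [hA]
    simp only [rootCoord, if_true]
    split_ifs <;> omega
  by_cases hi4 : i = m + 4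
  · have hA := adjD_last m j
    subst hi4
    have q : ¬ (m + 4 ≤ m + 3) := by omega
    simp only [hA]
    simp only [rootCoord, hi0, q, if_false]
    split_ifs <;> first | omega | (exfalso; simp_all)
  have q : i ≤ m + 3 := by omega
  simp only [rootCoord, hi0, q, if_false, if_true]
  by_cases hi1 : i = 1
  · have hA := adjD_one m j
    subst hi1
    simp only [hA]
    split_ifs <;> omega
  by_cases hi2 : i = 2
  · have hA := adjD_two m j
    subst hi2
    simp only [hA]
    split_ifs <;> first | omega | (exfalso; simp_all)
  have hA := adjD_mid m i j (by omega) q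
  simp only [hA]
  split_ifs <;> omega

/-- The weight is linear in the coordinates `x - x̄`. -/
theorem wt_shift (m : ℕ) (i : Fin (m + 5)) (c : ℤ) (v w : DV m)
    (h : ∀ k, w.1 k - w.2 k = v.1 k - v.2 k + c * rootCoord m i.val k.val) (j : Fin (m + 5)) :
    wtD m w j = wtD m v j + c * alphaD m i j := by
  rw [alphaD_eq]
  obtain ⟨j, hj⟩ := j
  have h0 : (0 : Fin (m + 4)).val = 0 := rfl
  have h1 : (1 : Fin (m + 4)).val = 1 := rfl
  have e0 := h 0
  have e1 := h 1
  rw [h0] at e0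
  rw [h1] at e1
  have e2 := h ⟨m + 2, by omega⟩
  have e3 := h ⟨m + 3, by omega⟩
  simp only [wtD]
  split_ifs with a b d
  · linarith
  · have e4 := h ⟨j - 1, by omega⟩
    have e5 := h ⟨j, by omega⟩
    linarith
  · linarith
  · linarith

theorem wt_eRaw (m : ℕ) (i : Fin (m + 5)) (v : DV m) :
    wtD m (eRaw m i.val v) = wtD m v + alphaD m i := by
  funext j
  rw [wt_shift m i 1 v _ (fun k => by rw [eRaw_diff, one_mul]) j, Pi.add_apply, one_mul]

theorem wt_fRaw (m : ℕ) (i : Fin (m + 5)) (v : DV m) :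
    wtD m (fRaw m i.val v) = wtD m v - alphaD m i := by
  funext j
  rw [wt_shift m i (-1) v _ (fun k => by rw [fRaw_diff]; ring) j, Pi.sub_apply]
  ring

/-- For the `D_n^{(1)}`-crystal `B^{1,s}` (here `n = m+4 ≥ 4`),
`wt(ẽ_i b) = wt(b) + α_i` whenever `ẽ_i b ≠ 0`, and `wt(f̃_i b) = wt(b) − α_i`
whenever `f̃_i b ≠ 0`, for all `i ∈ {0,1,…,n}`. -/
theorem B1s_wt_e_f (m s : ℕ) (i : Fin (m + 5)) (v w : DV m) (hv : DMem m s v) :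
    (eD m s i.val v = some w → wtD m w = wtD m v + alphaD m i) ∧
    (fD m s i.val v = some w → wtD m w = wtD m v - alphaD m i) := by
  constructor
  · intro h
    unfold eD at h
    split_ifs at h
    rw [← Option.some.inj h]
    exact wt_eRaw m i v
  · intro h
    unfold fD at h
    split_ifs at h
    rw [← Option.some.inj h]
    exact wt_fRaw m i v
end

section
/- Let ξ : B(1 2 1) → B(1 1 2) be Lecouvey's map defined by the explicit nine-case formula on triples x⊗y⊗z of letters in the alphabet {1<2<⋯<n−1<n,n̄<(n−1)‾<⋯<1̄} (with n and n̄ incomparable). Then ξ is a bijection between the subcrystals B(1 2 1) and B(1 1 2) of the triple tensor power of the vector crystal of D_n. -/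
open scoped Classical

/-- The `D_n` alphabet: nonzero integers `a` with `|a| ≤ n`; `a > 0` is the letter `a`,
`a < 0` is the barred letter `(-a)‾`. -/
def inAlpha (n : ℕ) (a : ℤ) : Prop := a ≠ 0 ∧ a.natAbs ≤ n

/-- The partial order on the `D_n` alphabet (with `n` and `n̄` incomparable). -/
def lleD (n : ℕ) (a b : ℤ) : Prop :=
  (0 < a ∧ 0 < b ∧ a ≤ b) ∨ (a < 0 ∧ b < 0 ∧ a ≤ b) ∨
  (0 < a ∧ b < 0 ∧ ¬(a = (n : ℤ) ∧ b = -(n : ℤ)))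

/-- Strict version of the partial order. -/
def lltD (n : ℕ) (a b : ℤ) : Prop := lleD n a b ∧ a ≠ b

/-- Crystal data on an alphabet of letters. -/
structure LetterOps (L : Type) where
  e : L → Option L
  f : L → Option L
  eps : L → ℤ
  phi : L → ℤ

/-- The crystal `B(Λ₁)` of `D_n`, for the classical index `1 ≤ i ≤ n`. -/
noncomputable def DLet (n i : ℕ) : LetterOps ℤ where
  e b := if i < n then
      (if b = (i : ℤ) + 1 then some (i : ℤ) else if b = -(i : ℤ) then some (-(i : ℤ) - 1) else none)
    else
      (if b = -((n : ℤ) - 1) then some (n : ℤ) else if b = -(n : ℤ) then some ((n : ℤ) - 1) else none)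
  f b := if i < n then
      (if b = (i : ℤ) then some ((i : ℤ) + 1) else if b = -(i : ℤ) - 1 then some (-(i : ℤ)) else none)
    else
      (if b = (n : ℤ) then some (-((n : ℤ) - 1)) else if b = (n : ℤ) - 1 then some (-(n : ℤ)) else none)
  eps b := if i < n then (if b = (i : ℤ) + 1 ∨ b = -(i : ℤ) then 1 else 0)
    else (if b = -((n : ℤ) - 1) ∨ b = -(n : ℤ) then 1 else 0)
  phi b := if i < n then (if b = (i : ℤ) ∨ b = -(i : ℤ) - 1 then 1 else 0)
    else (if b = (n : ℤ) ∨ b = (n : ℤ) - 1 then 1 else 0)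

/-- `ε_i` of a word `b₁ ⊗ b₂ ⊗ ⋯ ⊗ b_l` of letters, via the tensor product rule. -/
noncomputable def wEps {L : Type} (A : LetterOps L) : List L → ℤ
  | [] => 0
  | b :: t => max (A.eps b) (wEps A t - (A.phi b - A.eps b))

/-- `φ_i` of a word of letters, via the tensor product rule. -/
noncomputable def wPhi {L : Type} (A : LetterOps L) : List L → ℤ
  | [] => 0
  | b :: t => max (wPhi A t) (A.phi b + (wPhi A t - wEps A t))

/-- `ẽ_i` on a word of letters, via the tensor product rule. -/
noncomputable def wE {L : Type} (A : LetterOps L) : List L → Option (List L)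
  | [] => none
  | b :: t => if wEps A t ≤ A.phi b then (A.e b).map (· :: t) else (wE A t).map (b :: ·)

/-- `f̃_i` on a word of letters, via the tensor product rule. -/
noncomputable def wF {L : Type} (A : LetterOps L) : List L → Option (List L)
  | [] => none
  | b :: t => if wEps A t < A.phi b then (A.f b).map (· :: t) else (wF A t).map (b :: ·)

/-- One application of `ẽ_i` or `f̃_i` (for some classical index `1 ≤ i ≤ n`)
on a triple of letters, i.e. on `B(Λ₁)^{⊗3}` for `D_n`. -/
def step3 (n : ℕ) (a b : ℤ × ℤ × ℤ) : Prop :=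
  ∃ i, 1 ≤ i ∧ i ≤ n ∧
    (wE (DLet n i) [a.1, a.2.1, a.2.2] = some [b.1, b.2.1, b.2.2] ∨
     wF (DLet n i) [a.1, a.2.1, a.2.2] = some [b.1, b.2.1, b.2.2])

/-- The connected component (subcrystal) of `B(Λ₁)^{⊗3}` generated by `v`. -/
def comp3 (n : ℕ) (v : ℤ × ℤ × ℤ) : Set (ℤ × ℤ × ℤ) :=
  {w | Relation.ReflTransGen (step3 n) v w}

/-- Lecouvey's map `ξ`, given by the explicit nine-case formula on triples
`x ⊗ y ⊗ z` of letters of the `D_n` alphabet. -/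
noncomputable def xi (n : ℕ) (t : ℤ × ℤ × ℤ) : ℤ × ℤ × ℤ :=
  let x := t.1; let y := t.2.1; let z := t.2.2
  if lleD n z x ∧ lltD n x y ∧ y ≠ -z then (x, z, y)
  else if lltD n x z ∧ lleD n z y ∧ y ≠ -x then (y, x, z)
  else if y = -z ∧ 0 < z ∧ z < (n : ℤ) - 1 ∧ lltD n z x ∧ lltD n x (-z) then
    (x, z + 1, -(z + 1))
  else if y = -x ∧ 1 < x ∧ x < (n : ℤ) ∧ lleD n x z ∧ lleD n z (-x) then
    (-(x - 1), x - 1, z)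
  else if lleD n (-((n : ℤ) - 1)) y ∧ ((x = -(n : ℤ) ∧ z = (n : ℤ)) ∨ (x = (n : ℤ) ∧ z = -(n : ℤ))) then
    (y, x, z)
  else if lleD n z ((n : ℤ) - 1) ∧ ((x = -(n : ℤ) ∧ y = (n : ℤ)) ∨ (x = (n : ℤ) ∧ y = -(n : ℤ))) then
    (x, z, y)
  else if (x = (n : ℤ) ∧ y = -(n : ℤ) ∧ z = -(n : ℤ)) ∨ (x = -(n : ℤ) ∧ y = (n : ℤ) ∧ z = (n : ℤ)) then
    (-((n : ℤ) - 1), (n : ℤ) - 1, z)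
  else if x = -(n : ℤ) ∧ y = -((n : ℤ) - 1) ∧ z = (n : ℤ) - 1 then (-(n : ℤ), -(n : ℤ), (n : ℤ))
  else if x = (n : ℤ) ∧ y = -((n : ℤ) - 1) ∧ z = (n : ℤ) - 1 then ((n : ℤ), (n : ℤ), -(n : ℤ))
  else t

/-- letters of the alphabet, in a form convenient for `omega` -/
def Al (n : ℕ) (a : ℤ) : Prop := -(n : ℤ) ≤ a ∧ a ≤ n ∧ a ≠ 0

/-- strict order -/
def Lt (n : ℕ) (a b : ℤ) : Prop :=
  (0 < a ∧ 0 < b ∧ a < b) ∨ (a < 0 ∧ b < 0 ∧ a < b) ∨ (0 < a ∧ b < 0 ∧ a - b < 2 * (n : ℤ))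

/-- weak order -/
def Le (n : ℕ) (a b : ℤ) : Prop :=
  (0 < a ∧ 0 < b ∧ a ≤ b) ∨ (a < 0 ∧ b < 0 ∧ a ≤ b) ∨ (0 < a ∧ b < 0 ∧ a - b < 2 * (n : ℤ))

/-- The graph of `ξ`. -/
inductive R (n : ℕ) : ℤ → ℤ → ℤ → ℤ → ℤ → ℤ → Prop
  | c1 (x y z xprime yprime zprime : ℤ) (h1 : Le n z x) (h2 : Lt n x y) (h3 : y ≠ -z)
      (hx : xprime = x) (hy : yprime = z) (hz : zprime = y) : R n x y z xprime yprime zprime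
  | c2 (x y z xprime yprime zprime : ℤ) (h1 : Lt n x z) (h2 : Le n z y) (h3 : y ≠ -x)
      (hx : xprime = y) (hy : yprime = x) (hz : zprime = z) : R n x y z xprime yprime zprime
  | c3 (x y z xprime yprime zprime : ℤ) (h1 : y = -z) (h2 : 0 < z) (h3 : z < (n : ℤ) - 1)
      (h4 : z < x ∨ x < -z)
      (hx : xprime = x) (hy : yprime = z + 1) (hz : zprime = -(z + 1)) : R n x y z xprime yprime zprime
  | c4 (x y z xprime yprime zprime : ℤ) (h1 : y = -x) (h2 : 1 < x) (h3 : x < (n : ℤ))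
      (h4 : x ≤ z ∨ z ≤ -x)
      (hx : xprime = -(x - 1)) (hy : yprime = x - 1) (hz : zprime = z) : R n x y z xprime yprime zprime
  | c5 (x y z xprime yprime zprime : ℤ) (h1 : y < 0) (h2 : -((n : ℤ) - 1) ≤ y) (h3 : x = n ∨ x = -(n : ℤ))
      (h4 : z = -x)
      (hx : xprime = y) (hy : yprime = x) (hz : zprime = z) : R n x y z xprime yprime zprime
  | c6 (x y z xprime yprime zprime : ℤ) (h1 : 0 < z) (h2 : z ≤ (n : ℤ) - 1) (h3 : x = n ∨ x = -(n : ℤ))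
      (h4 : y = -x)
      (hx : xprime = x) (hy : yprime = z) (hz : zprime = y) : R n x y z xprime yprime zprime
  | c7 (x y z xprime yprime zprime : ℤ) (h3 : x = n ∨ x = -(n : ℤ)) (h4 : y = -x) (h5 : z = -x)
      (hx : xprime = -((n : ℤ) - 1)) (hy : yprime = (n : ℤ) - 1) (hz : zprime = z) : R n x y z xprime yprime zprime
  | c8 (x y z xprime yprime zprime : ℤ) (h3 : x = n ∨ x = -(n : ℤ)) (h4 : y = -((n : ℤ) - 1))
      (h5 : z = (n : ℤ) - 1)
      (hx : xprime = x) (hy : yprime = x) (hz : zprime = -x) : R n x y z xprime yprime zprime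

/-- The graph of `ξ` restricted to letters of the alphabet. -/
def RA (n : ℕ) (x y z xprime yprime zprime : ℤ) : Prop :=
  Al n x ∧ Al n y ∧ Al n z ∧ R n x y z xprime yprime zprime

set_option maxHeartbeats 1000000 in
theorem xi_of_RA (n : ℕ) (hn : 4 ≤ n) (x y z xprime yprime zprime : ℤ) (h : RA n x y z xprime yprime zprime) :
    xi n (x, y, z) = (xprime, yprime, zprime) := by
  obtain ⟨hx, hy, hz, h⟩ := h
  have hle : ∀ a b, Al n a → Al n b → (lleD n a b ↔ Le n a b) := by
    intro a b ha hb
    simp only [Al, lleD, Le] at *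
    omega
  have hlt : ∀ a b, Al n a → Al n b → (lltD n a b ↔ Lt n a b) := by
    intro a b ha hb
    simp only [Al, lltD, lleD, Lt] at *
    omega
  have ax : Al n (-x) := by simp only [Al] at *; omega
  have az : Al n (-z) := by simp only [Al] at *; omega
  have an : Al n ((n : ℤ) - 1) := by simp only [Al] at *; omega
  have anprime : Al n (-((n : ℤ) - 1)) := by simp only [Al] at *; omega
  simp only [xi, hle z x hz hx, hlt x y hx hy, hlt x z hx hz, hle z y hz hy, hlt z x hz hx,
    hlt x (-z) hx az, hle x z hx hz, hle z (-x) hz ax, hle _ y anprime hy, hle z _ hz an]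
  simp only [Al] at hx hy hz
  clear hle hlt ax az an anprime
  cases h with
  | c1 h1 h2 h3 hxprime hyprime hzprime =>
    rw [if_pos (by (try simp only [Le, Lt] at *); omega), hxprime, hyprime, hzprime]
  | c2 h1 h2 h3 hxprime hyprime hzprime =>
    iterate 1 rw [if_neg (by intro h; (try simp only [Le, Lt] at *); omega)]
    rw [if_pos (by (try simp only [Le, Lt] at *); omega), hxprime, hyprime, hzprime]
  | c3 h1 h2 h3 h4 hxprime hyprime hzprime =>
    iterate 2 rw [if_neg (by intro h; (try simp only [Le, Lt] at *); omega)]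
    rw [if_pos (by (try simp only [Le, Lt] at *); omega), hxprime, hyprime, hzprime]
  | c4 h1 h2 h3 h4 hxprime hyprime hzprime =>
    iterate 3 rw [if_neg (by intro h; (try simp only [Le, Lt] at *); omega)]
    rw [if_pos (by (try simp only [Le, Lt] at *); omega), hxprime, hyprime, hzprime]
  | c5 h1 h2 h3 h4 hxprime hyprime hzprime =>
    iterate 4 rw [if_neg (by intro h; (try simp only [Le, Lt] at *); omega)]
    rw [if_pos (by (try simp only [Le, Lt] at *); omega), hxprime, hyprime, hzprime]
  | c6 h1 h2 h3 h4 hxprime hyprime hzprime =>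
    iterate 5 rw [if_neg (by intro h; (try simp only [Le, Lt] at *); omega)]
    rw [if_pos (by (try simp only [Le, Lt] at *); omega), hxprime, hyprime, hzprime]
  | c7 h3 h4 h5 hxprime hyprime hzprime =>
    iterate 6 rw [if_neg (by intro h; (try simp only [Le, Lt] at *); omega)]
    rw [if_pos (by (try simp only [Le, Lt] at *); omega), hxprime, hyprime, hzprime]
  | c8 h3 h4 h5 hxprime hyprime hzprime =>
    iterate 7 rw [if_neg (by intro h; (try simp only [Le, Lt] at *); omega)]
    rcases h3 with h3 | h3
    · rw [if_neg (by intro h; (try simp only [Le, Lt] at *); omega)]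
      rw [if_pos (by omega), hxprime, hyprime, hzprime, h3]
    · rw [if_pos (by omega), hxprime, hyprime, hzprime, h3, neg_neg]

theorem RA_inj (n : ℕ) (hn : 4 ≤ n) (x y z u v w xprime yprime zprime : ℤ) (h : RA n x y z xprime yprime zprime)
    (g : RA n u v w xprime yprime zprime) : x = u ∧ y = v ∧ z = w := by
  obtain ⟨hx, hy, hz, h⟩ := h
  obtain ⟨hu, hv, hw, g⟩ := g
  simp only [Al] at *
  cases h <;> cases g <;> (try simp only [Le, Lt] at *) <;> omega

/-- The four letters moved by index `i`: `p → q` and `-q → -p`. -/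
def Idx (n i : ℕ) (p q : ℤ) : Prop :=
  ∀ b : ℤ,
    (b = p ∧ (DLet n i).eps b = 0 ∧ (DLet n i).phi b = 1 ∧ (DLet n i).e b = none ∧
      (DLet n i).f b = some q) ∨
    (b = -q ∧ (DLet n i).eps b = 0 ∧ (DLet n i).phi b = 1 ∧ (DLet n i).e b = none ∧
      (DLet n i).f b = some (-p)) ∨
    (b = q ∧ (DLet n i).eps b = 1 ∧ (DLet n i).phi b = 0 ∧ (DLet n i).e b = some p ∧
      (DLet n i).f b = none) ∨
    (b = -p ∧ (DLet n i).eps b = 1 ∧ (DLet n i).phi b = 0 ∧ (DLet n i).e b = some (-q) ∧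
      (DLet n i).f b = none) ∨
    ((b ≠ p ∧ b ≠ -q ∧ b ≠ q ∧ b ≠ -p) ∧ (DLet n i).eps b = 0 ∧ (DLet n i).phi b = 0 ∧
      (DLet n i).e b = none ∧ (DLet n i).f b = none)

theorem idx_exists (n i : ℕ) (hn : 4 ≤ n) (h1 : 1 ≤ i) (h2 : i ≤ n) :
    ∃ p q : ℤ, Idx n i p q ∧ ((1 ≤ p ∧ q = p + 1 ∧ q ≤ n) ∨ (p = (n : ℤ) - 1 ∧ q = -(n : ℤ))) := by
  by_cases hi : i < n
  · refine ⟨i, i + 1, ?_, Or.inl (by omega)⟩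
    intro b
    simp only [DLet, hi, if_true]
    split_ifs <;> simp <;> omega
  · refine ⟨(n : ℤ) - 1, -(n : ℤ), ?_, Or.inr (by omega)⟩
    intro b
    simp only [DLet, hi, if_false]
    split_ifs <;> simp <;> omega

/-- Commutation of one operator with the graph. -/
def Good (n : ℕ) (o oprime : Option (List ℤ)) : Prop :=
  (o = none ∧ oprime = none) ∨ ∃ a b c aprime bprime cprime : ℤ, o = some [a, b, c] ∧ oprime = some [aprime, bprime, cprime] ∧
    RA n a b c aprime bprime cprime

theorem good_none (n : ℕ) : Good n none none := Or.inl ⟨rfl, rfl⟩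

theorem good_some (n : ℕ) (a b c aprime bprime cprime : ℤ) (h : RA n a b c aprime bprime cprime) :
    Good n (some [a, b, c]) (some [aprime, bprime, cprime]) := Or.inr ⟨_, _, _, _, _, _, rfl, rfl, h⟩

/-- Admissible pairs `(p, q)`. -/
def PQ (n : ℕ) (p q : ℤ) : Prop :=
  (1 ≤ p ∧ q = p + 1 ∧ q < n) ∨ (p = (n : ℤ) - 1 ∧ q = n) ∨ (p = (n : ℤ) - 1 ∧ q = -(n : ℤ))

set_option linter.unusedSimpArgs false in
set_option maxHeartbeats 40000000 in
theorem step_perm1 (n i : ℕ) (hn : 4 ≤ n) (p q : ℤ) (hI : Idx n i p q) (hpq : PQ n p q)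
    (x y z : ℤ) (ax : Al n x) (ay : Al n y) (az : Al n z)
    (h : (Le n z x ∧ Lt n x y ∧ y ≠ -z) ∨
      ((0 < z ∧ z ≤ (n : ℤ) - 1) ∧ (x = n ∨ x = -(n : ℤ)) ∧ y = -x)) :
    Good n (wF (DLet n i) [x, y, z]) (wF (DLet n i) [x, z, y]) ∧
    Good n (wE (DLet n i) [x, y, z]) (wE (DLet n i) [x, z, y]) := by
  simp only [Al, Le, Lt, PQ] at ax ay az h hpq
  rcases hpq with hpq | hpq | hpq <;>
  rcases h with h | h <;>
  rcases hI x with ⟨hx0, hx1, hx2, hx3, hx4⟩ | ⟨hx0, hx1, hx2, hx3, hx4⟩ | ⟨hx0, hx1, hx2, hx3, hx4⟩ |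
    ⟨hx0, hx1, hx2, hx3, hx4⟩ | ⟨hx0, hx1, hx2, hx3, hx4⟩ <;>
  (try (exfalso; omega)) <;>
  rcases hI y with ⟨hy0, hy1, hy2, hy3, hy4⟩ | ⟨hy0, hy1, hy2, hy3, hy4⟩ | ⟨hy0, hy1, hy2, hy3, hy4⟩ |
    ⟨hy0, hy1, hy2, hy3, hy4⟩ | ⟨hy0, hy1, hy2, hy3, hy4⟩ <;>
  (try (exfalso; omega)) <;>
  rcases hI z with ⟨hz0, hz1, hz2, hz3, hz4⟩ | ⟨hz0, hz1, hz2, hz3, hz4⟩ | ⟨hz0, hz1, hz2, hz3, hz4⟩ |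
    ⟨hz0, hz1, hz2, hz3, hz4⟩ | ⟨hz0, hz1, hz2, hz3, hz4⟩ <;>
  (try (exfalso; omega)) <;>
  simp [wF, wE, wEps, hx1, hx2, hx3, hx4, hy1, hy2, hy3, hy4, hz1, hz2, hz3, hz4,
    good_none] <;>
  clear hx1 hx2 hx3 hx4 hy1 hy2 hy3 hy4 hz1 hz2 hz3 hz4 hI <;>
  (try apply And.intro) <;>
  refine good_some _ _ _ _ _ _ _ ⟨?_, ?_, ?_, ?_⟩ <;>
  first
  | (simp only [Al]; omega)
  | (apply R.c1 <;> (try simp only [Le, Lt]) <;> omega)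
  | (apply R.c2 <;> (try simp only [Le, Lt]) <;> omega)
  | (apply R.c3 <;> (try simp only [Le, Lt]) <;> omega)
  | (apply R.c4 <;> (try simp only [Le, Lt]) <;> omega)
  | (apply R.c5 <;> (try simp only [Le, Lt]) <;> omega)
  | (apply R.c6 <;> (try simp only [Le, Lt]) <;> omega)
  | (apply R.c7 <;> (try simp only [Le, Lt]) <;> omega)
  | (apply R.c8 <;> (try simp only [Le, Lt]) <;> omega)

set_option linter.unusedSimpArgs false in
set_option maxHeartbeats 40000000 in
theorem step_perm2 (n i : ℕ) (hn : 4 ≤ n) (p q : ℤ) (hI : Idx n i p q) (hpq : PQ n p q)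
    (x y z : ℤ) (ax : Al n x) (ay : Al n y) (az : Al n z)
    (h : (Lt n x z ∧ Le n z y ∧ y ≠ -x) ∨
      ((y < 0 ∧ -((n : ℤ) - 1) ≤ y) ∧ (x = n ∨ x = -(n : ℤ)) ∧ z = -x)) :
    Good n (wF (DLet n i) [x, y, z]) (wF (DLet n i) [y, x, z]) ∧
    Good n (wE (DLet n i) [x, y, z]) (wE (DLet n i) [y, x, z]) := by
  simp only [Al, Le, Lt, PQ] at ax ay az h hpq
  rcases hpq with hpq | hpq | hpq <;>
  rcases h with h | h <;>
  rcases hI x with ⟨hx0, hx1, hx2, hx3, hx4⟩ | ⟨hx0, hx1, hx2, hx3, hx4⟩ | ⟨hx0, hx1, hx2, hx3, hx4⟩ |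
    ⟨hx0, hx1, hx2, hx3, hx4⟩ | ⟨hx0, hx1, hx2, hx3, hx4⟩ <;>
  (try (exfalso; omega)) <;>
  rcases hI y with ⟨hy0, hy1, hy2, hy3, hy4⟩ | ⟨hy0, hy1, hy2, hy3, hy4⟩ | ⟨hy0, hy1, hy2, hy3, hy4⟩ |
    ⟨hy0, hy1, hy2, hy3, hy4⟩ | ⟨hy0, hy1, hy2, hy3, hy4⟩ <;>
  (try (exfalso; omega)) <;>
  rcases hI z with ⟨hz0, hz1, hz2, hz3, hz4⟩ | ⟨hz0, hz1, hz2, hz3, hz4⟩ | ⟨hz0, hz1, hz2, hz3, hz4⟩ |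
    ⟨hz0, hz1, hz2, hz3, hz4⟩ | ⟨hz0, hz1, hz2, hz3, hz4⟩ <;>
  (try (exfalso; omega)) <;>
  simp [wF, wE, wEps, hx1, hx2, hx3, hx4, hy1, hy2, hy3, hy4, hz1, hz2, hz3, hz4,
    good_none] <;>
  clear hx1 hx2 hx3 hx4 hy1 hy2 hy3 hy4 hz1 hz2 hz3 hz4 hI <;>
  (try apply And.intro) <;>
  refine good_some _ _ _ _ _ _ _ ⟨?_, ?_, ?_, ?_⟩ <;>
  first
  | (simp only [Al]; omega)
  | (apply R.c1 <;> (try simp only [Le, Lt]) <;> omega)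
  | (apply R.c2 <;> (try simp only [Le, Lt]) <;> omega)
  | (apply R.c3 <;> (try simp only [Le, Lt]) <;> omega)
  | (apply R.c4 <;> (try simp only [Le, Lt]) <;> omega)
  | (apply R.c5 <;> (try simp only [Le, Lt]) <;> omega)
  | (apply R.c6 <;> (try simp only [Le, Lt]) <;> omega)
  | (apply R.c7 <;> (try simp only [Le, Lt]) <;> omega)
  | (apply R.c8 <;> (try simp only [Le, Lt]) <;> omega)

set_option linter.unusedSimpArgs false in
set_option maxHeartbeats 40000000 in
theorem step_c3 (n i : ℕ) (hn : 4 ≤ n) (p q : ℤ) (hI : Idx n i p q) (hpq : PQ n p q)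
    (x y z u v w : ℤ) (ax : Al n x) (ay : Al n y) (az : Al n z)
    (h1 : y = -z) (h2 : 0 < z) (h3 : z < (n : ℤ) - 1) (h4 : z < x ∨ x < -z)
    (eu : u = x) (ev : v = z + 1) (ew : w = -(z + 1)) :
    Good n (wF (DLet n i) [x, y, z]) (wF (DLet n i) [u, v, w]) ∧
    Good n (wE (DLet n i) [x, y, z]) (wE (DLet n i) [u, v, w]) := by
  simp only [Al, PQ] at ax ay az hpq
  rcases hpq with hpq | hpq | hpq <;>
  rcases hI z with ⟨hz0, hz1, hz2, hz3, hz4⟩ | ⟨hz0, hz1, hz2, hz3, hz4⟩ | ⟨hz0, hz1, hz2, hz3, hz4⟩ |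
    ⟨hz0, hz1, hz2, hz3, hz4⟩ | ⟨hz0, hz1, hz2, hz3, hz4⟩ <;>
  (try (exfalso; omega)) <;>
  rcases hI y with ⟨hy0, hy1, hy2, hy3, hy4⟩ | ⟨hy0, hy1, hy2, hy3, hy4⟩ | ⟨hy0, hy1, hy2, hy3, hy4⟩ |
    ⟨hy0, hy1, hy2, hy3, hy4⟩ | ⟨hy0, hy1, hy2, hy3, hy4⟩ <;>
  (try (exfalso; omega)) <;>
  rcases hI v with ⟨hv0, hv1, hv2, hv3, hv4⟩ | ⟨hv0, hv1, hv2, hv3, hv4⟩ | ⟨hv0, hv1, hv2, hv3, hv4⟩ |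
    ⟨hv0, hv1, hv2, hv3, hv4⟩ | ⟨hv0, hv1, hv2, hv3, hv4⟩ <;>
  (try (exfalso; omega)) <;>
  rcases hI w with ⟨hw0, hw1, hw2, hw3, hw4⟩ | ⟨hw0, hw1, hw2, hw3, hw4⟩ | ⟨hw0, hw1, hw2, hw3, hw4⟩ |
    ⟨hw0, hw1, hw2, hw3, hw4⟩ | ⟨hw0, hw1, hw2, hw3, hw4⟩ <;>
  (try (exfalso; omega)) <;>
  rcases hI x with ⟨hx0, hx1, hx2, hx3, hx4⟩ | ⟨hx0, hx1, hx2, hx3, hx4⟩ | ⟨hx0, hx1, hx2, hx3, hx4⟩ |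
    ⟨hx0, hx1, hx2, hx3, hx4⟩ | ⟨hx0, hx1, hx2, hx3, hx4⟩ <;>
  (try (exfalso; omega)) <;>
  rcases hI u with ⟨hu0, hu1, hu2, hu3, hu4⟩ | ⟨hu0, hu1, hu2, hu3, hu4⟩ | ⟨hu0, hu1, hu2, hu3, hu4⟩ |
    ⟨hu0, hu1, hu2, hu3, hu4⟩ | ⟨hu0, hu1, hu2, hu3, hu4⟩ <;>
  (try (exfalso; omega)) <;>
  simp [wF, wE, wEps, hz1, hz2, hz3, hz4, hy1, hy2, hy3, hy4, hv1, hv2, hv3, hv4, hw1, hw2, hw3, hw4, hx1, hx2, hx3, hx4, hu1, hu2, hu3, hu4,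
    good_none] <;>
  clear hz1 hz2 hz3 hz4 hy1 hy2 hy3 hy4 hv1 hv2 hv3 hv4 hw1 hw2 hw3 hw4 hx1 hx2 hx3 hx4 hu1 hu2 hu3 hu4 hI <;>
  (try apply And.intro) <;>
  refine good_some _ _ _ _ _ _ _ ⟨?_, ?_, ?_, ?_⟩ <;>
  first
  | (simp only [Al]; omega)
  | (apply R.c1 <;> (try simp only [Le, Lt]) <;> omega)
  | (apply R.c2 <;> (try simp only [Le, Lt]) <;> omega)
  | (apply R.c3 <;> (try simp only [Le, Lt]) <;> omega)
  | (apply R.c4 <;> (try simp only [Le, Lt]) <;> omega)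
  | (apply R.c5 <;> (try simp only [Le, Lt]) <;> omega)
  | (apply R.c6 <;> (try simp only [Le, Lt]) <;> omega)
  | (apply R.c7 <;> (try simp only [Le, Lt]) <;> omega)
  | (apply R.c8 <;> (try simp only [Le, Lt]) <;> omega)

set_option linter.unusedSimpArgs false in
set_option maxHeartbeats 40000000 in
theorem step_c4 (n i : ℕ) (hn : 4 ≤ n) (p q : ℤ) (hI : Idx n i p q) (hpq : PQ n p q)
    (x y z u v w : ℤ) (ax : Al n x) (ay : Al n y) (az : Al n z)
    (h1 : y = -x) (h2 : 1 < x) (h3 : x < (n : ℤ)) (h4 : x ≤ z ∨ z ≤ -x)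
    (eu : u = -(x - 1)) (ev : v = x - 1) (ew : w = z) :
    Good n (wF (DLet n i) [x, y, z]) (wF (DLet n i) [u, v, w]) ∧
    Good n (wE (DLet n i) [x, y, z]) (wE (DLet n i) [u, v, w]) := by
  simp only [Al, PQ] at ax ay az hpq
  rcases hpq with hpq | hpq | hpq <;>
  rcases hI x with ⟨hx0, hx1, hx2, hx3, hx4⟩ | ⟨hx0, hx1, hx2, hx3, hx4⟩ | ⟨hx0, hx1, hx2, hx3, hx4⟩ |
    ⟨hx0, hx1, hx2, hx3, hx4⟩ | ⟨hx0, hx1, hx2, hx3, hx4⟩ <;>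
  (try (exfalso; omega)) <;>
  rcases hI y with ⟨hy0, hy1, hy2, hy3, hy4⟩ | ⟨hy0, hy1, hy2, hy3, hy4⟩ | ⟨hy0, hy1, hy2, hy3, hy4⟩ |
    ⟨hy0, hy1, hy2, hy3, hy4⟩ | ⟨hy0, hy1, hy2, hy3, hy4⟩ <;>
  (try (exfalso; omega)) <;>
  rcases hI u with ⟨hu0, hu1, hu2, hu3, hu4⟩ | ⟨hu0, hu1, hu2, hu3, hu4⟩ | ⟨hu0, hu1, hu2, hu3, hu4⟩ |
    ⟨hu0, hu1, hu2, hu3, hu4⟩ | ⟨hu0, hu1, hu2, hu3, hu4⟩ <;>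
  (try (exfalso; omega)) <;>
  rcases hI v with ⟨hv0, hv1, hv2, hv3, hv4⟩ | ⟨hv0, hv1, hv2, hv3, hv4⟩ | ⟨hv0, hv1, hv2, hv3, hv4⟩ |
    ⟨hv0, hv1, hv2, hv3, hv4⟩ | ⟨hv0, hv1, hv2, hv3, hv4⟩ <;>
  (try (exfalso; omega)) <;>
  rcases hI z with ⟨hz0, hz1, hz2, hz3, hz4⟩ | ⟨hz0, hz1, hz2, hz3, hz4⟩ | ⟨hz0, hz1, hz2, hz3, hz4⟩ |
    ⟨hz0, hz1, hz2, hz3, hz4⟩ | ⟨hz0, hz1, hz2, hz3, hz4⟩ <;>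
  (try (exfalso; omega)) <;>
  rcases hI w with ⟨hw0, hw1, hw2, hw3, hw4⟩ | ⟨hw0, hw1, hw2, hw3, hw4⟩ | ⟨hw0, hw1, hw2, hw3, hw4⟩ |
    ⟨hw0, hw1, hw2, hw3, hw4⟩ | ⟨hw0, hw1, hw2, hw3, hw4⟩ <;>
  (try (exfalso; omega)) <;>
  simp [wF, wE, wEps, hx1, hx2, hx3, hx4, hy1, hy2, hy3, hy4, hu1, hu2, hu3, hu4, hv1, hv2, hv3, hv4, hz1, hz2, hz3, hz4, hw1, hw2, hw3, hw4,
    good_none] <;>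
  clear hx1 hx2 hx3 hx4 hy1 hy2 hy3 hy4 hu1 hu2 hu3 hu4 hv1 hv2 hv3 hv4 hz1 hz2 hz3 hz4 hw1 hw2 hw3 hw4 hI <;>
  (try apply And.intro) <;>
  refine good_some _ _ _ _ _ _ _ ⟨?_, ?_, ?_, ?_⟩ <;>
  first
  | (simp only [Al]; omega)
  | (apply R.c1 <;> (try simp only [Le, Lt]) <;> omega)
  | (apply R.c2 <;> (try simp only [Le, Lt]) <;> omega)
  | (apply R.c3 <;> (try simp only [Le, Lt]) <;> omega)
  | (apply R.c4 <;> (try simp only [Le, Lt]) <;> omega)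
  | (apply R.c5 <;> (try simp only [Le, Lt]) <;> omega)
  | (apply R.c6 <;> (try simp only [Le, Lt]) <;> omega)
  | (apply R.c7 <;> (try simp only [Le, Lt]) <;> omega)
  | (apply R.c8 <;> (try simp only [Le, Lt]) <;> omega)

set_option linter.unusedSimpArgs false in
set_option maxHeartbeats 40000000 in
theorem step_c78 (n i : ℕ) (hn : 4 ≤ n) (p q : ℤ) (hI : Idx n i p q) (hpq : PQ n p q)
    (x y z u v w : ℤ) (ax : Al n x) (ay : Al n y) (az : Al n z)
    (h3 : x = n ∨ x = -(n : ℤ))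
    (h : (y = -x ∧ z = -x ∧ u = -((n : ℤ) - 1) ∧ v = (n : ℤ) - 1 ∧ w = z) ∨
      (y = -((n : ℤ) - 1) ∧ z = (n : ℤ) - 1 ∧ u = x ∧ v = x ∧ w = -x)) :
    Good n (wF (DLet n i) [x, y, z]) (wF (DLet n i) [u, v, w]) ∧
    Good n (wE (DLet n i) [x, y, z]) (wE (DLet n i) [u, v, w]) := by
  simp only [Al, PQ] at ax ay az hpq
  rcases hpq with hpq | hpq | hpq <;>
  rcases h with h | h <;>
  rcases h3 with h3 | h3 <;>
  rcases hI x with ⟨hx0, hx1, hx2, hx3, hx4⟩ | ⟨hx0, hx1, hx2, hx3, hx4⟩ | ⟨hx0, hx1, hx2, hx3, hx4⟩ |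
    ⟨hx0, hx1, hx2, hx3, hx4⟩ | ⟨hx0, hx1, hx2, hx3, hx4⟩ <;>
  (try (exfalso; omega)) <;>
  rcases hI y with ⟨hy0, hy1, hy2, hy3, hy4⟩ | ⟨hy0, hy1, hy2, hy3, hy4⟩ | ⟨hy0, hy1, hy2, hy3, hy4⟩ |
    ⟨hy0, hy1, hy2, hy3, hy4⟩ | ⟨hy0, hy1, hy2, hy3, hy4⟩ <;>
  (try (exfalso; omega)) <;>
  rcases hI z with ⟨hz0, hz1, hz2, hz3, hz4⟩ | ⟨hz0, hz1, hz2, hz3, hz4⟩ | ⟨hz0, hz1, hz2, hz3, hz4⟩ |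
    ⟨hz0, hz1, hz2, hz3, hz4⟩ | ⟨hz0, hz1, hz2, hz3, hz4⟩ <;>
  (try (exfalso; omega)) <;>
  rcases hI u with ⟨hu0, hu1, hu2, hu3, hu4⟩ | ⟨hu0, hu1, hu2, hu3, hu4⟩ | ⟨hu0, hu1, hu2, hu3, hu4⟩ |
    ⟨hu0, hu1, hu2, hu3, hu4⟩ | ⟨hu0, hu1, hu2, hu3, hu4⟩ <;>
  (try (exfalso; omega)) <;>
  rcases hI v with ⟨hv0, hv1, hv2, hv3, hv4⟩ | ⟨hv0, hv1, hv2, hv3, hv4⟩ | ⟨hv0, hv1, hv2, hv3, hv4⟩ |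
    ⟨hv0, hv1, hv2, hv3, hv4⟩ | ⟨hv0, hv1, hv2, hv3, hv4⟩ <;>
  (try (exfalso; omega)) <;>
  rcases hI w with ⟨hw0, hw1, hw2, hw3, hw4⟩ | ⟨hw0, hw1, hw2, hw3, hw4⟩ | ⟨hw0, hw1, hw2, hw3, hw4⟩ |
    ⟨hw0, hw1, hw2, hw3, hw4⟩ | ⟨hw0, hw1, hw2, hw3, hw4⟩ <;>
  (try (exfalso; omega)) <;>
  simp [wF, wE, wEps, hx1, hx2, hx3, hx4, hy1, hy2, hy3, hy4, hz1, hz2, hz3, hz4, hu1, hu2, hu3, hu4, hv1, hv2, hv3, hv4, hw1, hw2, hw3, hw4,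
    good_none] <;>
  clear hx1 hx2 hx3 hx4 hy1 hy2 hy3 hy4 hz1 hz2 hz3 hz4 hu1 hu2 hu3 hu4 hv1 hv2 hv3 hv4 hw1 hw2 hw3 hw4 hI <;>
  (try apply And.intro) <;>
  refine good_some _ _ _ _ _ _ _ ⟨?_, ?_, ?_, ?_⟩ <;>
  first
  | (simp only [Al]; omega)
  | (apply R.c1 <;> (try simp only [Le, Lt]) <;> omega)
  | (apply R.c2 <;> (try simp only [Le, Lt]) <;> omega)
  | (apply R.c3 <;> (try simp only [Le, Lt]) <;> omega)
  | (apply R.c4 <;> (try simp only [Le, Lt]) <;> omega)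
  | (apply R.c5 <;> (try simp only [Le, Lt]) <;> omega)
  | (apply R.c6 <;> (try simp only [Le, Lt]) <;> omega)
  | (apply R.c7 <;> (try simp only [Le, Lt]) <;> omega)
  | (apply R.c8 <;> (try simp only [Le, Lt]) <;> omega)

theorem RA_step (n i : ℕ) (hn : 4 ≤ n) (h1 : 1 ≤ i) (h2 : i ≤ n) (x y z u v w : ℤ)
    (h : RA n x y z u v w) :
    Good n (wF (DLet n i) [x, y, z]) (wF (DLet n i) [u, v, w]) ∧
    Good n (wE (DLet n i) [x, y, z]) (wE (DLet n i) [u, v, w]) := by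
  obtain ⟨p, q, hI, hpqprime⟩ := idx_exists n i hn h1 h2
  have hpq : PQ n p q := by simp only [PQ]; omega
  obtain ⟨ax, ay, az, h⟩ := h
  cases h with
  | c1 g1 g2 g3 hu hv hw =>
    subst hu hv hw
    exact step_perm1 n i hn p q hI hpq _ _ _ ax ay az (Or.inl ⟨g1, g2, g3⟩)
  | c2 g1 g2 g3 hu hv hw =>
    subst hu hv hw
    exact step_perm2 n i hn p q hI hpq _ _ _ ax ay az (Or.inl ⟨g1, g2, g3⟩)
  | c3 g1 g2 g3 g4 hu hv hw =>
    exact step_c3 n i hn p q hI hpq _ _ _ _ _ _ ax ay az g1 g2 g3 g4 hu hv hw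
  | c4 g1 g2 g3 g4 hu hv hw =>
    exact step_c4 n i hn p q hI hpq _ _ _ _ _ _ ax ay az g1 g2 g3 g4 hu hv hw
  | c5 g1 g2 g3 g4 hu hv hw =>
    subst hu hv hw
    exact step_perm2 n i hn p q hI hpq _ _ _ ax ay az (Or.inr ⟨⟨g1, g2⟩, g3, g4⟩)
  | c6 g1 g2 g3 g4 hu hv hw =>
    subst hu hv hw
    exact step_perm1 n i hn p q hI hpq _ _ _ ax ay az (Or.inr ⟨⟨g1, g2⟩, g3, g4⟩)
  | c7 g3 g4 g5 hu hv hw =>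
    exact step_c78 n i hn p q hI hpq _ _ _ _ _ _ ax ay az g3 (Or.inl ⟨g4, g5, hu, hv, hw⟩)
  | c8 g3 g4 g5 hu hv hw =>
    exact step_c78 n i hn p q hI hpq _ _ _ _ _ _ ax ay az g3 (Or.inr ⟨g4, g5, hu, hv, hw⟩)

/-- The graph on triples. -/
def RT (n : ℕ) (t s : ℤ × ℤ × ℤ) : Prop := RA n t.1 t.2.1 t.2.2 s.1 s.2.1 s.2.2

theorem good_fwd (n : ℕ) (o oprime : Option (List ℤ)) (h : Good n o oprime) (a b c : ℤ)
    (ho : o = some [a, b, c]) : ∃ sprime : ℤ × ℤ × ℤ, oprime = some [sprime.1, sprime.2.1, sprime.2.2] ∧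
      RT n (a, b, c) sprime := by
  rcases h with ⟨h, -⟩ | ⟨a1, b1, c1, aprime, bprime, cprime, h, hprime, hr⟩
  · rw [h] at ho; cases ho
  · rw [h] at ho; cases ho
    exact ⟨(aprime, bprime, cprime), hprime, hr⟩

theorem good_bwd (n : ℕ) (o oprime : Option (List ℤ)) (h : Good n o oprime) (a b c : ℤ)
    (ho : oprime = some [a, b, c]) : ∃ tprime : ℤ × ℤ × ℤ, o = some [tprime.1, tprime.2.1, tprime.2.2] ∧
      RT n tprime (a, b, c) := by
  rcases h with ⟨-, h⟩ | ⟨a1, b1, c1, aprime, bprime, cprime, h, hprime, hr⟩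
  · rw [h] at ho; cases ho
  · rw [hprime] at ho; cases ho
    exact ⟨(a1, b1, c1), h, hr⟩

theorem step_fwd (n : ℕ) (hn : 4 ≤ n) (t s tprime : ℤ × ℤ × ℤ) (h : RT n t s) (ht : step3 n t tprime) :
    ∃ sprime, step3 n s sprime ∧ RT n tprime sprime := by
  obtain ⟨i, h1, h2, ho | ho⟩ := ht
  · obtain ⟨sprime, hs, hr⟩ := good_fwd n _ _ (RA_step n i hn h1 h2 _ _ _ _ _ _ h).2 _ _ _ ho
    exact ⟨sprime, ⟨i, h1, h2, Or.inl hs⟩, hr⟩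
  · obtain ⟨sprime, hs, hr⟩ := good_fwd n _ _ (RA_step n i hn h1 h2 _ _ _ _ _ _ h).1 _ _ _ ho
    exact ⟨sprime, ⟨i, h1, h2, Or.inr hs⟩, hr⟩

theorem step_bwd (n : ℕ) (hn : 4 ≤ n) (t s sprime : ℤ × ℤ × ℤ) (h : RT n t s) (hs : step3 n s sprime) :
    ∃ tprime, step3 n t tprime ∧ RT n tprime sprime := by
  obtain ⟨i, h1, h2, ho | ho⟩ := hs
  · obtain ⟨tprime, ht, hr⟩ := good_bwd n _ _ (RA_step n i hn h1 h2 _ _ _ _ _ _ h).2 _ _ _ ho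
    exact ⟨tprime, ⟨i, h1, h2, Or.inl ht⟩, hr⟩
  · obtain ⟨tprime, ht, hr⟩ := good_bwd n _ _ (RA_step n i hn h1 h2 _ _ _ _ _ _ h).1 _ _ _ ho
    exact ⟨tprime, ⟨i, h1, h2, Or.inr ht⟩, hr⟩

theorem RT_base (n : ℕ) (hn : 4 ≤ n) : RT n (1, 2, 1) (1, 1, 2) := by
  refine ⟨?_, ?_, ?_, R.c1 _ _ _ _ _ _ ?_ ?_ ?_ rfl rfl rfl⟩ <;>
    simp only [Al, Le, Lt] <;> omega

theorem comp_fwd (n : ℕ) (hn : 4 ≤ n) (t : ℤ × ℤ × ℤ) (ht : t ∈ comp3 n (1, 2, 1)) :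
    ∃ s ∈ comp3 n (1, 1, 2), RT n t s := by
  induction ht with
  | refl => exact ⟨_, Relation.ReflTransGen.refl, RT_base n hn⟩
  | tail _ hst ih =>
    obtain ⟨s, hs, hr⟩ := ih
    obtain ⟨sprime, hsprime, hrprime⟩ := step_fwd n hn _ _ _ hr hst
    exact ⟨sprime, Relation.ReflTransGen.tail hs hsprime, hrprime⟩

theorem comp_bwd (n : ℕ) (hn : 4 ≤ n) (s : ℤ × ℤ × ℤ) (hs : s ∈ comp3 n (1, 1, 2)) :
    ∃ t ∈ comp3 n (1, 2, 1), RT n t s := by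
  induction hs with
  | refl => exact ⟨_, Relation.ReflTransGen.refl, RT_base n hn⟩
  | tail _ hst ih =>
    obtain ⟨t, ht, hr⟩ := ih
    obtain ⟨tprime, htprime, hrprime⟩ := step_bwd n hn _ _ _ hr hst
    exact ⟨tprime, Relation.ReflTransGen.tail ht htprime, hrprime⟩

theorem xi_of_RT (n : ℕ) (hn : 4 ≤ n) (t s : ℤ × ℤ × ℤ) (h : RT n t s) : xi n t = s :=
  xi_of_RA n hn _ _ _ _ _ _ h

/-- Lecouvey's map `ξ` is a bijection between the subcrystals
`B(1 2 1)` and `B(1 1 2)` of `B(Λ₁)^{⊗3}` for `D_n`. -/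
theorem xi_bijOn (n : ℕ) (hn : 4 ≤ n) :
    Set.BijOn (xi n) (comp3 n (1, 2, 1)) (comp3 n (1, 1, 2)) := by
  refine ⟨?_, ?_, ?_⟩
  · intro t ht
    obtain ⟨s, hs, hr⟩ := comp_fwd n hn t ht
    rw [xi_of_RT n hn t s hr]
    exact hs
  · intro t ht tprime htprime he
    obtain ⟨s, hs, hr⟩ := comp_fwd n hn t ht
    obtain ⟨sprime, hsprime, hrprime⟩ := comp_fwd n hn tprime htprime
    rw [xi_of_RT n hn t s hr, xi_of_RT n hn tprime sprime hrprime] at he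
    subst he
    obtain ⟨h1, h2, h3⟩ := RA_inj n hn _ _ _ _ _ _ _ _ _ hr hrprime
    exact Prod.ext h1 (Prod.ext h2 h3)
  · intro s hs
    obtain ⟨t, ht, hr⟩ := comp_bwd n hn s hs
    exact ⟨t, ht, xi_of_RT n hn t s hr⟩
end

section
/- The map i_s from the A₁^{(1)} ⊕ D_{n−2}^{(1)} crystal B̂^{1,s} × B^{1,s} (n > 5) to (B^{2,1})^{⊗s}, sending ((j, s−j), (b₁,…,b_s)) to [2/b_s′]⊗⋯⊗[2/b_{s−j}′]⊗[1/b_{s−j−1}′]⊗⋯⊗[1/b₁′] with b′ = b+2 for letters 1 ≤ b ≤ n−2 and b′ = (c+2)‾ for b = c̄, intertwines the crystal operators: i_s(ẽ₁^A T, T′) = ẽ₁ i_s(T,T′), i_s(f̃₁^A T, T′) = f̃₁ i_s(T,T′), and i_s(T, ẽ_i^D T′) = ẽ_{i+2} i_s(T,T′), i_s(T, f̃_i^D T′) = f̃_{i+2} i_s(T,T′) for 1 ≤ i ≤ n−2. -/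
open scoped Classical

/-- The weakly increasing row word `1^{x₁} 2^{x₂} ⋯ M^{x_M} M̄^{x̄_M} ⋯ 1̄^{x̄₁}` of an
element of the one-row crystal `B^{1,s}` (alphabet of size `M = m+4`). -/
noncomputable def rowWordD (m : ℕ) (v : DV m) : List ℤ :=
  ((List.finRange (m + 4)).flatMap
      (fun j => List.replicate (v.1 j).toNat ((j.val : ℤ) + 1))) ++
  ((List.finRange (m + 4)).reverse.flatMap
      (fun j => List.replicate (v.2 j).toNat (-((j.val : ℤ) + 1))))

/-- The shift of the `D_{n−2}` alphabet into `𝓑 ∖ {1,2,2̄,1̄}`: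
`b ↦ b+2` and `c̄ ↦ (c+2)‾`. -/
noncomputable def shift2 (b : ℤ) : ℤ := if 0 < b then b + 2 else b - 2

/-- The flattened reading word of `i_s((j, s−j), b)`: the element
`[2/b_s′] ⊗ ⋯ ⊗ [2/b_{s−j}′] ⊗ [1/b_{s−j−1}′] ⊗ ⋯ ⊗ [1/b₁′]` of `(B^{2,1})^{⊗s}`. -/
noncomputable def isFlat (m s : ℕ) (j : ℕ) (v : DV m) : List ℤ :=
  (((List.replicate (s - j) (2 : ℤ) ++ List.replicate j (1 : ℤ)).zip
      (((rowWordD m v).map shift2).reverse)).map (fun p => [p.1, p.2])).flatten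


section Helpers

set_option linter.unusedSimpArgs false
set_option linter.unusedVariables false

/-- Sanity conditions on letters for a word calculus. -/
structure LGood (A : LetterOps ℤ) : Prop where
  eps0 : ∀ b, 0 ≤ A.eps b
  phi0 : ∀ b, 0 ≤ A.phi b
  e0 : ∀ b, A.eps b = 0 → A.e b = none
  f0 : ∀ b, A.phi b = 0 → A.f b = none

theorem lgood_DLet (n i : ℕ) : LGood (DLet n i) := by
  constructor
  · intro b; simp only [DLet]; split_ifs <;> simp
  · intro b; simp only [DLet]; split_ifs <;> simp
  · intro b; simp only [DLet]; split_ifs <;> simp_all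
  · intro b; simp only [DLet]; split_ifs <;> simp_all

variable {A : LetterOps ℤ}

theorem wEps_nonneg (hA : LGood A) (t : List ℤ) : 0 ≤ wEps A t := by
  cases t with
  | nil => simp [wEps]
  | cons b t => exact le_trans (hA.eps0 b) (le_max_left _ _)

theorem wPhi_nonneg (A : LetterOps ℤ) (t : List ℤ) : 0 ≤ wPhi A t := by
  induction t with
  | nil => simp [wPhi]
  | cons b t ih => exact le_trans ih (le_max_left _ _)

theorem wE_none (hA : LGood A) (t : List ℤ) (h : wEps A t ≤ 0) : wE A t = none := by
  cases t with
  | nil => rfl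
  | cons b t =>
    have h1 := hA.eps0 b
    simp only [wEps] at h
    have h2 : A.eps b = 0 := by omega
    have h3 : wEps A t ≤ A.phi b := by omega
    simp [wE, h3, hA.e0 b h2]

theorem wF_none (hA : LGood A) (t : List ℤ) (h : wPhi A t ≤ 0) : wF A t = none := by
  induction t with
  | nil => rfl
  | cons b t ih =>
    have h1 := hA.phi0 b
    have h4 := wPhi_nonneg A t
    simp only [wPhi] at h
    have h3 : ¬ wEps A t < A.phi b := by omega
    simp [wF, h3, ih (by omega)]

theorem wEps_append (hA : LGood A) (u t : List ℤ) :
    wEps A (u ++ t) = max (wEps A u) (wEps A t - (wPhi A u - wEps A u)) := by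
  induction u with
  | nil => have := wEps_nonneg hA t; simp [wEps, wPhi, this]
  | cons b u ih => simp only [List.cons_append, wEps, wPhi, ih]; omega

theorem wPhi_append (hA : LGood A) (u t : List ℤ) :
    wPhi A (u ++ t) = max (wPhi A t) (wPhi A u + (wPhi A t - wEps A t)) := by
  induction u with
  | nil => have := wEps_nonneg hA t; simp [wPhi, this]
  | cons b u ih => simp only [List.cons_append, wPhi, ih, wEps_append hA]; omega

theorem wE_append_right (p t : List ℤ) (h : wPhi A p < wEps A t) :
    wE A (p ++ t) = (wE A t).map (p ++ ·) := by
  induction p with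
  | nil => simp
  | cons b u ih =>
    simp only [wPhi] at h
    have h1 := ih (by omega)
    have h2 : ¬ wEps A (u ++ t) ≤ A.phi b := by
      have : wEps A t - (wPhi A u - wEps A u) ≤ wEps A (u ++ t) := by
        clear h h1 ih
        induction u with
        | nil => simp [wEps, wPhi]
        | cons b u ih => simp only [List.cons_append, wEps, wPhi]; omega
      omega
    simp only [List.cons_append, wE, h2, if_false, h1, Option.map_map]
    rfl

theorem wF_append_right (p t : List ℤ) (h : wPhi A p ≤ wEps A t) :
    wF A (p ++ t) = (wF A t).map (p ++ ·) := by
  induction p with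
  | nil => simp
  | cons b u ih =>
    simp only [wPhi] at h
    have h1 := ih (by omega)
    have h2 : ¬ wEps A (u ++ t) < A.phi b := by
      have : wEps A t - (wPhi A u - wEps A u) ≤ wEps A (u ++ t) := by
        clear h h1 ih
        induction u with
        | nil => simp [wEps, wPhi]
        | cons b u ih => simp only [List.cons_append, wEps, wPhi]; omega
      omega
    simp only [List.cons_append, wF, h2, if_false, h1, Option.map_map]
    rfl

theorem wE_at (p q : List ℤ) (x y : ℤ) (hx : A.e x = some y)
    (he : A.eps x = 1) (hf : A.phi x = 0) (hp : wPhi A p ≤ 0) (hq : wEps A q ≤ 0) :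
    wE A (p ++ x :: q) = some (p ++ y :: q) := by
  rw [wE_append_right]
  · simp [wE, hf, hq, hx]
  · simp only [wEps]; omega

theorem wF_at (p q : List ℤ) (x y : ℤ) (hx : A.f x = some y)
    (he : A.eps x = 0) (hf : A.phi x = 1) (hp : wPhi A p ≤ 0) (hq : wEps A q ≤ 0) :
    wF A (p ++ x :: q) = some (p ++ y :: q) := by
  rw [wF_append_right]
  · have : wEps A q < 1 := by omega
    simp [wF, hf, this, hx]
  · simp only [wEps]; omega

theorem neut_word (p : List ℤ) (h : ∀ b ∈ p, A.eps b = 0 ∧ A.phi b = 0) :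
    wEps A p = 0 ∧ wPhi A p = 0 := by
  induction p with
  | nil => simp [wEps, wPhi]
  | cons b u ih =>
    have h1 := ih (fun c hc => h c (List.mem_cons_of_mem _ hc))
    have h2 := h b List.mem_cons_self
    simp [wEps, wPhi, h1, h2]

theorem rep_eps (n : ℕ) (x : ℤ) (he : A.eps x = 1) (hf : A.phi x = 0) :
    wEps A (List.replicate n x) = n ∧ wPhi A (List.replicate n x) = 0 := by
  induction n with
  | zero => simp [wEps, wPhi]
  | succ n ih => simp only [List.replicate_succ, wEps, wPhi, ih, he, hf]; push_cast; omega

theorem rep_phi (n : ℕ) (x : ℤ) (he : A.eps x = 0) (hf : A.phi x = 1) :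
    wEps A (List.replicate n x) = 0 ∧ wPhi A (List.replicate n x) = n := by
  induction n with
  | zero => simp [wEps, wPhi]
  | succ n ih => simp only [List.replicate_succ, wEps, wPhi, ih, he, hf]; push_cast; omega

/-- Interleaving of two words. -/
def il (cs ds : List ℤ) : List ℤ := ((cs.zip ds).map (fun p => [p.1, p.2])).flatten

theorem il_cons (c d : ℤ) (cs ds : List ℤ) : il (c :: cs) (d :: ds) = c :: d :: il cs ds := by
  simp [il]

theorem neut_cons (hA : LGood A) (c : ℤ) (t : List ℤ) (he : A.eps c = 0) (hf : A.phi c = 0) :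
    wEps A (c :: t) = wEps A t ∧ wE A (c :: t) = (wE A t).map (c :: ·) ∧
      wF A (c :: t) = (wF A t).map (c :: ·) := by
  have h := wEps_nonneg hA t
  refine ⟨by simp only [wEps]; omega, ?_, ?_⟩
  · by_cases h0 : wEps A t ≤ 0
    · simp [wE, wE_none hA t h0, hf, h0, hA.e0 c he]
    · simp [wE, hf, h0]
  · have : ¬ wEps A t < 0 := by omega
    simp [wF, hf, this]

theorem il_right (hA : LGood A) (ds : List ℤ) : ∀ cs : List ℤ, ds.length = cs.length →
    (∀ c ∈ cs, A.eps c = 0 ∧ A.phi c = 0) →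
    wEps A (il cs ds) = wEps A ds ∧ wE A (il cs ds) = (wE A ds).map (il cs) ∧
      wF A (il cs ds) = (wF A ds).map (il cs) := by
  induction ds with
  | nil => intro cs h _; simp [il, wE, wF]
  | cons d ds ih =>
    intro cs h hc
    cases cs with
    | nil => simp at h
    | cons c cs =>
      obtain ⟨h1, h2, h3⟩ := ih cs (by simpa using h) (fun x hx => hc x (List.mem_cons_of_mem _ hx))
      obtain ⟨k1, k2⟩ := hc c List.mem_cons_self
      obtain ⟨m1, m2, m3⟩ := neut_cons hA c (d :: il cs ds) k1 k2
      rw [il_cons, m1, m2, m3]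
      refine ⟨by simp only [wEps, h1], ?_, ?_⟩
      · simp only [wE, h1, h2]
        split_ifs <;> simp [Option.map_map, Function.comp_def, il_cons]
      · simp only [wF, h1, h3]
        split_ifs <;> simp [Option.map_map, Function.comp_def, il_cons]

theorem il_left (hA : LGood A) (cs : List ℤ) : ∀ ds : List ℤ, ds.length = cs.length →
    (∀ c ∈ ds, A.eps c = 0 ∧ A.phi c = 0) →
    wEps A (il cs ds) = wEps A cs ∧ wE A (il cs ds) = (wE A cs).map (il · ds) ∧
      wF A (il cs ds) = (wF A cs).map (il · ds) := by
  induction cs with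
  | nil => intro cs h _; simp [il, wE, wF]
  | cons c cs ih =>
    intro ds h hc
    cases ds with
    | nil => simp at h
    | cons d ds =>
      obtain ⟨h1, h2, h3⟩ := ih ds (by simpa using h) (fun x hx => hc x (List.mem_cons_of_mem _ hx))
      obtain ⟨k1, k2⟩ := hc d List.mem_cons_self
      obtain ⟨m1, m2, m3⟩ := neut_cons hA d (il cs ds) k1 k2
      rw [il_cons]
      generalize hZ : d :: il cs ds = Z at m1 m2 m3 ⊢
      refine ⟨by simp only [wEps, m1, h1], ?_, ?_⟩
      · simp only [wE, m1, m2, h1, h2]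
        split_ifs <;> simp [Option.map_map, Function.comp_def, il_cons, ← hZ]
      · simp only [wF, m1, m3, h1, h3]
        split_ifs <;> simp [Option.map_map, Function.comp_def, il_cons, ← hZ]

/-- The reversed shifted row word. -/
noncomputable def ww (m : ℕ) (v : DV m) : List ℤ := ((rowWordD m v).map shift2).reverse

theorem isFlat_eq (m s j : ℕ) (v : DV m) :
    isFlat m s j v = il (List.replicate (s - j) (2 : ℤ) ++ List.replicate j (1 : ℤ)) (ww m v) := rfl

theorem ww_eq (m : ℕ) (v : DV m) : ww m v =
    ((List.finRange (m + 4)).flatMap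
      (fun j => List.replicate (v.2 j).toNat (-((j.val : ℤ) + 3)))) ++
    ((List.finRange (m + 4)).reverse.flatMap
      (fun j => List.replicate (v.1 j).toNat ((j.val : ℤ) + 3))) := by
  have h1 : ∀ j : ℕ, shift2 ((j : ℤ) + 1) = (j : ℤ) + 3 := by
    intro j; unfold shift2; split_ifs <;> omega
  have h2 : ∀ j : ℕ, shift2 (-((j : ℤ) + 1)) = -((j : ℤ) + 3) := by
    intro j; unfold shift2; split_ifs <;> omega
  simp only [ww, rowWordD, List.map_append, List.reverse_append, List.map_flatMap,
    List.map_replicate, h1, h2, List.reverse_flatMap, List.reverse_reverse, Function.comp_def,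
    List.reverse_replicate]

theorem ww_length (m s : ℕ) (v : DV m) (hv : DMem m s v) : (ww m v).length = s := by
  obtain ⟨h1, h2, h3, -⟩ := hv
  have e1 : ∀ f : Fin (m + 4) → ℤ, (∀ j, 0 ≤ f j) →
      (((List.finRange (m + 4)).map (fun j => (f j).toNat)).sum : ℤ) = Finset.univ.sum f := by
    intro f hf
    rw [← List.ofFn_eq_map, List.sum_ofFn]
    push_cast
    exact Finset.sum_congr rfl (fun j _ => by have := hf j; omega)
  have a1 := e1 _ h1
  have a2 := e1 _ h2
  rw [ww_eq]
  simp only [List.length_append, List.length_flatMap, List.length_replicate, List.map_reverse,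
    List.sum_reverse]
  omega

theorem ww_mem (m : ℕ) (v : DV m) : ∀ b ∈ ww m v, 3 ≤ b ∨ b ≤ -3 := by
  intro b hb
  rw [ww_eq] at hb
  simp only [List.mem_append, List.mem_flatMap, List.mem_replicate] at hb
  rcases hb with ⟨j, _, _, rfl⟩ | ⟨j, _, _, rfl⟩ <;> omega

/-- A word with four blocks of relevant letters separated by other words. -/
def Wd (P1 P2 P3 : List ℤ) (α β γ δ : ℤ) (a b c d : ℕ) : List ℤ :=
  P1 ++ (List.replicate a α ++ (List.replicate b β ++ (P2 ++
    (List.replicate c γ ++ (List.replicate d δ ++ P3)))))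

theorem ww_split (m k : ℕ) (hk : k + 1 < m + 4) (v : DV m) : ∃ P1 P2 P3 : List ℤ,
    (∀ b ∈ P1 ++ (P2 ++ P3), b.natAbs ≠ k + 3 ∧ b.natAbs ≠ k + 4) ∧
    (k = m + 2 → P2 = []) ∧
    ∀ v' : DV m, (∀ j : Fin (m + 4), j.val ≠ k → j.val ≠ k + 1 → v'.1 j = v.1 j ∧ v'.2 j = v.2 j) →
      ww m v' = Wd P1 P2 P3 (-((k : ℤ) + 3)) (-((k : ℤ) + 4)) ((k : ℤ) + 4) ((k : ℤ) + 3)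
        (v'.2 ⟨k, by omega⟩).toNat (v'.2 ⟨k + 1, hk⟩).toNat
        (v'.1 ⟨k + 1, hk⟩).toNat (v'.1 ⟨k, by omega⟩).toNat := by
  obtain ⟨L, R, hLR, hRn⟩ : ∃ L R, List.finRange (m + 4) =
      L ++ (⟨k, by omega⟩ : Fin (m + 4)) :: (⟨k + 1, hk⟩ : Fin (m + 4)) :: R ∧
      (k = m + 2 → R = []) := by
    refine ⟨(List.finRange (m + 4)).take k, (List.finRange (m + 4)).drop (k + 2), ?_,
      fun h => by subst h; simp⟩
    conv_lhs => rw [← List.take_append_drop k (List.finRange (m + 4))]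
    rw [List.drop_eq_getElem_cons (by simp; omega), List.drop_eq_getElem_cons (by simp; omega)]
    simp
  have hnd := List.nodup_finRange (m + 4)
  rw [hLR] at hnd
  have hL : ∀ j ∈ L, j.val ≠ k ∧ j.val ≠ k + 1 := by
    intro j hj
    rw [List.nodup_append] at hnd
    have h1 := hnd.2.2 j hj
    refine ⟨fun h => h1 ⟨k, by omega⟩ (by simp) (Fin.ext h), fun h => h1 ⟨k + 1, hk⟩ (by simp) (Fin.ext h)⟩
  have hR : ∀ j ∈ R, j.val ≠ k ∧ j.val ≠ k + 1 := by
    intro j hj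
    have h2 := (List.nodup_append.1 hnd).2.1
    simp only [List.nodup_cons, List.mem_cons, not_or] at h2
    refine ⟨fun h => h2.1.2 ?_, fun h => h2.2.1 ?_⟩
    · have : j = ⟨k, by omega⟩ := Fin.ext h
      exact this ▸ hj
    · have : j = ⟨k + 1, hk⟩ := Fin.ext h
      exact this ▸ hj
  refine ⟨L.flatMap (fun j => List.replicate (v.2 j).toNat (-((j.val : ℤ) + 3))),
    R.flatMap (fun j => List.replicate (v.2 j).toNat (-((j.val : ℤ) + 3))) ++
    R.reverse.flatMap (fun j => List.replicate (v.1 j).toNat ((j.val : ℤ) + 3)),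
    L.reverse.flatMap (fun j => List.replicate (v.1 j).toNat ((j.val : ℤ) + 3)), ?_, fun h => by simp [hRn h], ?_⟩
  · intro b hb
    simp only [List.mem_append, List.mem_flatMap, List.mem_replicate, List.mem_reverse] at hb
    rcases hb with ⟨j, hj, _, rfl⟩ | (⟨j, hj, _, rfl⟩ | ⟨j, hj, _, rfl⟩) | ⟨j, hj, _, rfl⟩
    · have := hL j hj; omega
    · have := hR j hj; omega
    · have := hR j hj; omega
    · have := hL j hj; omega
  · intro v' hv'
    have c2 : ∀ l : List (Fin (m + 4)), (∀ j ∈ l, j.val ≠ k ∧ j.val ≠ k + 1) →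
        l.flatMap (fun j => List.replicate (v'.2 j).toNat (-((j.val : ℤ) + 3))) =
        l.flatMap (fun j => List.replicate (v.2 j).toNat (-((j.val : ℤ) + 3))) := by
      intro l hl
      apply List.flatMap_congr
      intro j hj
      rw [(hv' j (hl j hj).1 (hl j hj).2).2]
    have c1 : ∀ l : List (Fin (m + 4)), (∀ j ∈ l, j.val ≠ k ∧ j.val ≠ k + 1) →
        l.flatMap (fun j => List.replicate (v'.1 j).toNat ((j.val : ℤ) + 3)) =
        l.flatMap (fun j => List.replicate (v.1 j).toNat ((j.val : ℤ) + 3)) := by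
      intro l hl
      apply List.flatMap_congr
      intro j hj
      rw [(hv' j (hl j hj).1 (hl j hj).2).1]
    have z : ((k + 1 : ℕ) : ℤ) + 3 = (k : ℤ) + 4 := by push_cast; ring
    rw [Wd, ww_eq, hLR, ← c2 L hL, ← c2 R hR, ← c1 R.reverse (by simpa using hR),
      ← c1 L.reverse (by simpa using hL)]
    simp only [List.flatMap_append, List.flatMap_cons, List.reverse_append, List.reverse_cons,
      List.append_assoc, List.flatMap_nil, List.append_nil, z]

theorem rep_split (n : ℕ) (x : ℤ) (t : List ℤ) :
    List.replicate (n + 1) x ++ t = List.replicate n x ++ x :: t := by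
  rw [List.replicate_succ']; simp

section Mid

variable {P1 P2 P3 : List ℤ} {α β γ δ : ℤ}

theorem mid_all (hA : LGood A) (h1 : ∀ b ∈ P1 ++ (P2 ++ P3), A.eps b = 0 ∧ A.phi b = 0)
    (ea : A.eps α = 1) (pa : A.phi α = 0) (eb : A.eps β = 0) (pb : A.phi β = 1)
    (ec : A.eps γ = 1) (pc : A.phi γ = 0) (ed : A.eps δ = 0) (pd : A.phi δ = 1)
    (xa : A.e α = some β) (xc : A.e γ = some δ) (yb : A.f β = some α) (yd : A.f δ = some γ)
    (a b c d : ℕ) :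
    (b ≤ c → wE A (Wd P1 P2 P3 α β γ δ a b (c + 1) d) = some (Wd P1 P2 P3 α β γ δ a b c (d + 1))) ∧
    (c ≤ b → wE A (Wd P1 P2 P3 α β γ δ (a + 1) b c d) = some (Wd P1 P2 P3 α β γ δ a (b + 1) c d)) ∧
    (c ≤ b → wE A (Wd P1 P2 P3 α β γ δ 0 b c d) = none) ∧
    (c ≤ b → wF A (Wd P1 P2 P3 α β γ δ a (b + 1) c d) = some (Wd P1 P2 P3 α β γ δ (a + 1) b c d)) ∧
    (b ≤ c → wF A (Wd P1 P2 P3 α β γ δ a b c (d + 1)) = some (Wd P1 P2 P3 α β γ δ a b (c + 1) d)) ∧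
    (b ≤ c → wF A (Wd P1 P2 P3 α β γ δ a b c 0) = none) := by
  have n1 := neut_word (A := A) P1 (fun b hb => h1 b (by simp [hb]))
  have n2 := neut_word (A := A) P2 (fun b hb => h1 b (by simp [hb]))
  have n3 := neut_word (A := A) P3 (fun b hb => h1 b (by simp [hb]))
  have ra := fun n => rep_eps (A := A) n α ea pa
  have rb := fun n => rep_phi (A := A) n β eb pb
  have rc := fun n => rep_eps (A := A) n γ ec pc
  have rd := fun n => rep_phi (A := A) n δ ed pd
  refine ⟨fun h => ?_, fun h => ?_, fun h => ?_, fun h => ?_, fun h => ?_, fun h => ?_⟩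
  · have := wE_at (A := A) (P1 ++ (List.replicate a α ++ (List.replicate b β ++ (P2 ++
      List.replicate c γ)))) (List.replicate d δ ++ P3) γ δ xc ec pc
      (by simp only [wPhi_append hA, wEps_append hA, n1, n2, n3, ra, rb, rc, rd]; omega)
      (by simp only [wPhi_append hA, wEps_append hA, n1, n2, n3, ra, rb, rc, rd]; omega)
    rw [Wd, Wd, rep_split c γ, List.replicate_succ (n := d)]
    simpa using this
  · have := wE_at (A := A) (P1 ++ List.replicate a α) (List.replicate b β ++ (P2 ++
      (List.replicate c γ ++ (List.replicate d δ ++ P3)))) α β xa ea pa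
      (by simp only [wPhi_append hA, wEps_append hA, n1, n2, n3, ra, rb, rc, rd]; omega)
      (by simp only [wPhi_append hA, wEps_append hA, n1, n2, n3, ra, rb, rc, rd]; omega)
    rw [Wd, Wd, rep_split a α, List.replicate_succ (n := b)]
    simpa using this
  · apply wE_none hA
    simp only [Wd, wPhi_append hA, wEps_append hA, n1, n2, n3, ra, rb, rc, rd]; omega
  · have := wF_at (A := A) (P1 ++ List.replicate a α) (List.replicate b β ++ (P2 ++
      (List.replicate c γ ++ (List.replicate d δ ++ P3)))) β α yb eb pb
      (by simp only [wPhi_append hA, wEps_append hA, n1, n2, n3, ra, rb, rc, rd]; omega)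
      (by simp only [wPhi_append hA, wEps_append hA, n1, n2, n3, ra, rb, rc, rd]; omega)
    rw [Wd, Wd, rep_split a α, List.replicate_succ (n := b)]
    simpa using this
  · have := wF_at (A := A) (P1 ++ (List.replicate a α ++ (List.replicate b β ++ (P2 ++
      List.replicate c γ)))) (List.replicate d δ ++ P3) δ γ yd ed pd
      (by simp only [wPhi_append hA, wEps_append hA, n1, n2, n3, ra, rb, rc, rd]; omega)
      (by simp only [wPhi_append hA, wEps_append hA, n1, n2, n3, ra, rb, rc, rd]; omega)
    rw [Wd, Wd, rep_split c γ, List.replicate_succ (n := d)]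
    simpa using this
  · apply wF_none hA
    simp only [Wd, wPhi_append hA, wEps_append hA, n1, n2, n3, ra, rb, rc, rd]; omega

theorem spin_all (hA : LGood A) (h1 : ∀ b ∈ P1 ++ ([] ++ P3), A.eps b = 0 ∧ A.phi b = 0)
    (ea : A.eps α = 1) (pa : A.phi α = 0) (eb : A.eps β = 1) (pb : A.phi β = 0)
    (ec : A.eps γ = 0) (pc : A.phi γ = 1) (ed : A.eps δ = 0) (pd : A.phi δ = 1)
    (xa : A.e α = some γ) (xb : A.e β = some δ) (yc : A.f γ = some α) (yd : A.f δ = some β)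
    (a b c d : ℕ) :
    wE A (Wd P1 [] P3 α β γ δ a (b + 1) 0 d) = some (Wd P1 [] P3 α β γ δ a b 0 (d + 1)) ∧
    wE A (Wd P1 [] P3 α β γ δ (a + 1) 0 c d) = some (Wd P1 [] P3 α β γ δ a 0 (c + 1) d) ∧
    wE A (Wd P1 [] P3 α β γ δ 0 0 c d) = none ∧
    wF A (Wd P1 [] P3 α β γ δ a 0 (c + 1) d) = some (Wd P1 [] P3 α β γ δ (a + 1) 0 c d) ∧
    wF A (Wd P1 [] P3 α β γ δ a b 0 (d + 1)) = some (Wd P1 [] P3 α β γ δ a (b + 1) 0 d) ∧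
    wF A (Wd P1 [] P3 α β γ δ a b 0 0) = none := by
  have n1 := neut_word (A := A) P1 (fun b hb => h1 b (by simp [hb]))
  have n2 := neut_word (A := A) [] (by simp)
  have n3 := neut_word (A := A) P3 (fun b hb => h1 b (by simp [hb]))
  have ra := fun n => rep_eps (A := A) n α ea pa
  have rb := fun n => rep_eps (A := A) n β eb pb
  have rc := fun n => rep_phi (A := A) n γ ec pc
  have rd := fun n => rep_phi (A := A) n δ ed pd
  refine ⟨?_, ?_, ?_, ?_, ?_, ?_⟩
  · have := wE_at (A := A) (P1 ++ (List.replicate a α ++ List.replicate b β))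
      (List.replicate d δ ++ P3) β δ xb eb pb
      (by simp only [wPhi_append hA, wEps_append hA, n1, n2, n3, ra, rb, rc, rd]; omega)
      (by simp only [wPhi_append hA, wEps_append hA, n1, n2, n3, ra, rb, rc, rd]; omega)
    rw [Wd, Wd, rep_split b β, List.replicate_succ (n := d)]
    simpa using this
  · have := wE_at (A := A) (P1 ++ List.replicate a α)
      (List.replicate c γ ++ (List.replicate d δ ++ P3)) α γ xa ea pa
      (by simp only [wPhi_append hA, wEps_append hA, n1, n2, n3, ra, rb, rc, rd]; omega)
      (by simp only [wPhi_append hA, wEps_append hA, n1, n2, n3, ra, rb, rc, rd]; omega)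
    rw [Wd, Wd, rep_split a α, List.replicate_succ (n := c)]
    simpa using this
  · apply wE_none hA
    simp only [Wd, wPhi_append hA, wEps_append hA, n1, n2, n3, ra, rb, rc, rd]; omega
  · have := wF_at (A := A) (P1 ++ List.replicate a α)
      (List.replicate c γ ++ (List.replicate d δ ++ P3)) γ α yc ec pc
      (by simp only [wPhi_append hA, wEps_append hA, n1, n2, n3, ra, rb, rc, rd]; omega)
      (by simp only [wPhi_append hA, wEps_append hA, n1, n2, n3, ra, rb, rc, rd]; omega)
    rw [Wd, Wd, rep_split a α, List.replicate_succ (n := c)]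
    simpa using this
  · have := wF_at (A := A) (P1 ++ (List.replicate a α ++ List.replicate b β))
      (List.replicate d δ ++ P3) δ β yd ed pd
      (by simp only [wPhi_append hA, wEps_append hA, n1, n2, n3, ra, rb, rc, rd]; omega)
      (by simp only [wPhi_append hA, wEps_append hA, n1, n2, n3, ra, rb, rc, rd]; omega)
    rw [Wd, Wd, rep_split b β, List.replicate_succ (n := d)]
    simpa using this
  · apply wF_none hA
    simp only [Wd, wPhi_append hA, wEps_append hA, n1, n2, n3, ra, rb, rc, rd]; omega

end Mid

/-- `v'` agrees with `v` away from positions `k`, `k+1`. -/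
def Agree (m k : ℕ) (v' v : DV m) : Prop :=
  ∀ j : Fin (m + 4), j.val ≠ k → j.val ≠ k + 1 → v'.1 j = v.1 j ∧ v'.2 j = v.2 j

theorem dmem_two (m s k : ℕ) (hk : k + 1 < m + 4) (v v' : DV m) (hv : DMem m s v)
    (ha : Agree m k v' v)
    (p1 : 0 ≤ v'.1 ⟨k, by omega⟩) (p2 : 0 ≤ v'.1 ⟨k + 1, hk⟩)
    (p3 : 0 ≤ v'.2 ⟨k, by omega⟩) (p4 : 0 ≤ v'.2 ⟨k + 1, hk⟩)
    (hsum : v'.1 ⟨k, by omega⟩ + v'.1 ⟨k + 1, hk⟩ + v'.2 ⟨k, by omega⟩ + v'.2 ⟨k + 1, hk⟩ =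
      v.1 ⟨k, by omega⟩ + v.1 ⟨k + 1, hk⟩ + v.2 ⟨k, by omega⟩ + v.2 ⟨k + 1, hk⟩)
    (hlast : k = m + 2 → v'.1 ⟨k + 1, hk⟩ = 0 ∨ v'.2 ⟨k + 1, hk⟩ = 0) : DMem m s v' := by
  obtain ⟨h1, h2, h3, h4⟩ := hv
  have key : ∀ f g : Fin (m + 4) → ℤ, (∀ j : Fin (m + 4), j.val ≠ k → j.val ≠ k + 1 → f j = g j) →
      Finset.univ.sum f - Finset.univ.sum g =
        (f ⟨k, by omega⟩ - g ⟨k, by omega⟩) + (f ⟨k + 1, hk⟩ - g ⟨k + 1, hk⟩) := by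
    intro f g hfg
    rw [← Finset.sum_sub_distrib]
    apply Finset.sum_eq_add (⟨k, by omega⟩ : Fin (m + 4)) (⟨k + 1, hk⟩ : Fin (m + 4))
    · simp
    · intro c _ hc
      rw [hfg c (fun h => hc.1 (Fin.ext h)) (fun h => hc.2 (Fin.ext h)), sub_self]
    · simp
    · simp
  have k1 := key v'.1 v.1 (fun j a b => (ha j a b).1)
  have k2 := key v'.2 v.2 (fun j a b => (ha j a b).2)
  refine ⟨fun j => ?_, fun j => ?_, by omega, ?_⟩
  · by_cases e1 : j.val = k
    · rwa [show j = ⟨k, by omega⟩ from Fin.ext e1]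
    by_cases e2 : j.val = k + 1
    · rwa [show j = ⟨k + 1, hk⟩ from Fin.ext e2]
    rw [(ha j e1 e2).1]; exact h1 j
  · by_cases e1 : j.val = k
    · rwa [show j = ⟨k, by omega⟩ from Fin.ext e1]
    by_cases e2 : j.val = k + 1
    · rwa [show j = ⟨k + 1, hk⟩ from Fin.ext e2]
    rw [(ha j e1 e2).2]; exact h2 j
  · by_cases e : k = m + 2
    · subst e; exact hlast rfl
    · have := ha ⟨m + 3, by omega⟩ (by simp; omega) (by simp; omega)
      rw [this.1, this.2]; exact h4

theorem eRaw_mid (m k : ℕ) (hk : k + 1 < m + 4) (v : DV m) : eRaw m (k + 1) v =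
    if v.2 ⟨k + 1, hk⟩ < v.1 ⟨k + 1, hk⟩ then
       (bump (bump v.1 ⟨k, by omega⟩ 1) ⟨k + 1, hk⟩ (-1), v.2)
     else (v.1, bump (bump v.2 ⟨k + 1, hk⟩ 1) ⟨k, by omega⟩ (-1)) := by
  have : k + 1 ≤ m + 3 := by omega
  simp [eRaw, this]

theorem fRaw_mid (m k : ℕ) (hk : k + 1 < m + 4) (v : DV m) : fRaw m (k + 1) v =
    if v.2 ⟨k + 1, hk⟩ ≤ v.1 ⟨k + 1, hk⟩ then
       (bump (bump v.1 ⟨k, by omega⟩ (-1)) ⟨k + 1, hk⟩ 1, v.2)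
     else (v.1, bump (bump v.2 ⟨k + 1, hk⟩ (-1)) ⟨k, by omega⟩ 1) := by
  have : k + 1 ≤ m + 3 := by omega
  simp [fRaw, this]

theorem eRaw_last (m : ℕ) (v : DV m) : eRaw m (m + 4) v =
    if v.2 ⟨m + 2 + 1, by omega⟩ = 0 then
       (bump v.1 ⟨m + 2 + 1, by omega⟩ 1, bump v.2 ⟨m + 2, by omega⟩ (-1))
     else (bump v.1 ⟨m + 2, by omega⟩ 1, bump v.2 ⟨m + 2 + 1, by omega⟩ (-1)) := by
  simp [eRaw]

theorem fRaw_last (m : ℕ) (v : DV m) : fRaw m (m + 4) v =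
    if 0 < v.1 ⟨m + 2 + 1, by omega⟩ then
       (bump v.1 ⟨m + 2 + 1, by omega⟩ (-1), bump v.2 ⟨m + 2, by omega⟩ 1)
     else (bump v.1 ⟨m + 2, by omega⟩ (-1), bump v.2 ⟨m + 2 + 1, by omega⟩ 1) := by
  simp [fRaw]

theorem bump_at {m : ℕ} (f : Fin (m + 4) → ℤ) (i j : ℕ) (hi : i < m + 4) (hj : j < m + 4) (d : ℤ) :
    bump f ⟨i, hi⟩ d ⟨j, hj⟩ = if j = i then f ⟨j, hj⟩ + d else f ⟨j, hj⟩ := by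
  unfold bump
  by_cases h : j = i
  · subst h; simp
  · simp [Function.update, h]

theorem bump_off {m : ℕ} (f : Fin (m + 4) → ℤ) (i : ℕ) (hi : i < m + 4) (j : Fin (m + 4)) (d : ℤ)
    (h : j.val ≠ i) : bump f ⟨i, hi⟩ d j = f j := by
  unfold bump
  rw [Function.update_of_ne]
  exact fun e => h (by simp [e])

theorem dl_mid_neut (n i : ℕ) (hi : i < n) (b : ℤ) (h : b.natAbs ≠ i ∧ b.natAbs ≠ i + 1) :
    (DLet n i).eps b = 0 ∧ (DLet n i).phi b = 0 := by
  simp only [DLet, hi, if_true]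
  constructor <;> rw [if_neg] <;> omega

theorem dl_last_neut (n : ℕ) (hn : 1 ≤ n) (b : ℤ) (h : b.natAbs ≠ n - 1 ∧ b.natAbs ≠ n) :
    (DLet n n).eps b = 0 ∧ (DLet n n).phi b = 0 := by
  simp only [DLet, lt_irrefl, if_false]
  constructor <;> rw [if_neg] <;> omega

theorem ag1 (m k : ℕ) (hk : k + 1 < m + 4) (v : DV m) (d d' : ℤ) :
    Agree m k (bump (bump v.1 ⟨k, by omega⟩ d) ⟨k + 1, hk⟩ d', v.2) v := fun j x y =>
  ⟨(bump_off _ _ _ _ _ y).trans (bump_off _ _ _ _ _ x), rfl⟩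

theorem ag2 (m k : ℕ) (hk : k + 1 < m + 4) (v : DV m) (d d' : ℤ) :
    Agree m k (v.1, bump (bump v.2 ⟨k + 1, hk⟩ d) ⟨k, by omega⟩ d') v := fun j x y =>
  ⟨rfl, (bump_off _ _ _ _ _ x).trans (bump_off _ _ _ _ _ y)⟩

theorem ag3 (m k : ℕ) (hk : k + 1 < m + 4) (v : DV m) (d d' : ℤ) :
    Agree m k (bump v.1 ⟨k + 1, hk⟩ d, bump v.2 ⟨k, by omega⟩ d') v := fun j x y =>
  ⟨bump_off _ _ _ _ _ y, bump_off _ _ _ _ _ x⟩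

theorem ag4 (m k : ℕ) (hk : k + 1 < m + 4) (v : DV m) (d d' : ℤ) :
    Agree m k (bump v.1 ⟨k, by omega⟩ d, bump v.2 ⟨k + 1, hk⟩ d') v := fun j x y =>
  ⟨bump_off _ _ _ _ _ x, bump_off _ _ _ _ _ y⟩

theorem mid_E (m s k : ℕ) (hk : k + 1 < m + 4) (v : DV m) (hv : DMem m s v) :
    wE (DLet (m + 6) (k + 3)) (ww m v) = (eD m s (k + 1) v).map (ww m) ∧
    wF (DLet (m + 6) (k + 3)) (ww m v) = (fD m s (k + 1) v).map (ww m) := by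
  obtain ⟨P1, P2, P3, hn, -, H⟩ := ww_split m k hk v
  have hi : k + 3 < m + 6 := by omega
  have M := mid_all (A := DLet (m + 6) (k + 3)) (P1 := P1) (P2 := P2) (P3 := P3)
    (α := -((k : ℤ) + 3)) (β := -((k : ℤ) + 4)) (γ := (k : ℤ) + 4) (δ := (k : ℤ) + 3)
    (lgood_DLet _ _) (fun b hb => dl_mid_neut _ _ hi b (hn b hb))
    (by simp only [DLet, hi, if_true]; push_cast; split_ifs <;> omega)
    (by simp only [DLet, hi, if_true]; push_cast; split_ifs <;> omega)
    (by simp only [DLet, hi, if_true]; push_cast; split_ifs <;> omega)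
    (by simp only [DLet, hi, if_true]; push_cast; split_ifs <;> omega)
    (by simp only [DLet, hi, if_true]; push_cast; split_ifs <;> omega)
    (by simp only [DLet, hi, if_true]; push_cast; split_ifs <;> omega)
    (by simp only [DLet, hi, if_true]; push_cast; split_ifs <;> omega)
    (by simp only [DLet, hi, if_true]; push_cast; split_ifs <;> omega)
    (by simp only [DLet, hi, if_true]; push_cast; split_ifs <;> first | omega | (congr 1 <;> omega))
    (by simp only [DLet, hi, if_true]; push_cast; split_ifs <;> first | omega | (congr 1 <;> omega))
    (by simp only [DLet, hi, if_true]; push_cast; split_ifs <;> first | omega | (congr 1 <;> omega))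
    (by simp only [DLet, hi, if_true]; push_cast; split_ifs <;> first | omega | (congr 1 <;> omega))
  have q1 := hv.1 ⟨k, by omega⟩
  have q2 := hv.1 ⟨k + 1, hk⟩
  have q3 := hv.2.1 ⟨k, by omega⟩
  have q4 := hv.2.1 ⟨k + 1, hk⟩
  have q5 : k = m + 2 → v.1 ⟨k + 1, hk⟩ = 0 ∨ v.2 ⟨k + 1, hk⟩ = 0 := by
    intro h; subst h; exact hv.2.2.2
  have Hv := H v (fun _ _ _ => ⟨rfl, rfl⟩)
  have b1 : ¬ (k = k + 1) := by omega
  have b2 : ¬ (k + 1 = k) := by omega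
  constructor
  · rw [eD, eRaw_mid m k hk, Hv]
    split_ifs with h1 h2 h2
    · have Hv' := H _ (ag1 m k hk v 1 (-1))
      simp only [bump_at, b1, b2, if_true, if_false] at Hv'
      rw [Option.map_some, Hv']
      have := (M (v.2 ⟨k, by omega⟩).toNat (v.2 ⟨k + 1, hk⟩).toNat
        (v.1 ⟨k + 1, hk⟩ + -1).toNat (v.1 ⟨k, by omega⟩).toNat).1 (by omega)
      convert this using 3 <;> omega
    · exfalso; apply h2
      apply dmem_two m s k hk v _ hv (ag1 m k hk v _ _) <;>
      simp only [bump_at, b1, b2, if_true, if_false] <;> omega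
    · have Hv' := H _ (ag2 m k hk v 1 (-1))
      simp only [bump_at, b1, b2, if_true, if_false] at Hv'
      rw [Option.map_some, Hv']
      have h3 := h2.2.1 ⟨k, by omega⟩
      simp only [bump_at, b1, b2, if_true, if_false] at h3
      have := (M (v.2 ⟨k, by omega⟩ + -1).toNat (v.2 ⟨k + 1, hk⟩).toNat
        (v.1 ⟨k + 1, hk⟩).toNat (v.1 ⟨k, by omega⟩).toNat).2.1 (by omega)
      convert this using 3 <;> omega
    · have h3 : ¬ 0 < v.2 ⟨k, by omega⟩ := by
        intro h4; apply h2
        apply dmem_two m s k hk v _ hv (ag2 m k hk v _ _) <;>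
        simp only [bump_at, b1, b2, if_true, if_false] <;> omega
      have := (M (v.2 ⟨k, by omega⟩).toNat (v.2 ⟨k + 1, hk⟩).toNat
        (v.1 ⟨k + 1, hk⟩).toNat (v.1 ⟨k, by omega⟩).toNat).2.2.1 (by omega)
      rw [Option.map_none]
      convert this using 3; omega
  · rw [fD, fRaw_mid m k hk, Hv]
    split_ifs with h1 h2 h2
    · have Hv' := H _ (ag1 m k hk v (-1) 1)
      simp only [bump_at, b1, b2, if_true, if_false] at Hv'
      rw [Option.map_some, Hv']
      have h3 := h2.1 ⟨k, by omega⟩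
      simp only [bump_at, b1, b2, if_true, if_false] at h3
      have := (M (v.2 ⟨k, by omega⟩).toNat (v.2 ⟨k + 1, hk⟩).toNat
        (v.1 ⟨k + 1, hk⟩).toNat (v.1 ⟨k, by omega⟩ + -1).toNat).2.2.2.2.1 (by omega)
      convert this using 3 <;> omega
    · have h3 : ¬ 0 < v.1 ⟨k, by omega⟩ := by
        intro h4; apply h2
        apply dmem_two m s k hk v _ hv (ag1 m k hk v _ _) <;>
        simp only [bump_at, b1, b2, if_true, if_false] <;> omega
      have := (M (v.2 ⟨k, by omega⟩).toNat (v.2 ⟨k + 1, hk⟩).toNat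
        (v.1 ⟨k + 1, hk⟩).toNat (v.1 ⟨k, by omega⟩).toNat).2.2.2.2.2 (by omega)
      rw [Option.map_none]
      convert this using 3; omega
    · have Hv' := H _ (ag2 m k hk v (-1) 1)
      simp only [bump_at, b1, b2, if_true, if_false] at Hv'
      rw [Option.map_some, Hv']
      have := (M (v.2 ⟨k, by omega⟩).toNat (v.2 ⟨k + 1, hk⟩ + -1).toNat
        (v.1 ⟨k + 1, hk⟩).toNat (v.1 ⟨k, by omega⟩).toNat).2.2.2.1 (by omega)
      convert this using 3 <;> omega
    · exfalso; apply h2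
      apply dmem_two m s k hk v _ hv (ag2 m k hk v _ _) <;>
      simp only [bump_at, b1, b2, if_true, if_false] <;> omega

theorem last_E (m s k : ℕ) (hkm : k = m + 2) (v : DV m) (hv : DMem m s v) :
    wE (DLet (m + 6) (m + 6)) (ww m v) = (eD m s (m + 4) v).map (ww m) ∧
    wF (DLet (m + 6) (m + 6)) (ww m v) = (fD m s (m + 4) v).map (ww m) := by
  have hk : k + 1 < m + 4 := by omega
  obtain ⟨P1, P2, P3, hn, hP2, H⟩ := ww_split m k hk v
  obtain rfl := hP2 hkm
  have hi : ¬ m + 6 < m + 6 := by omega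
  have M := spin_all (A := DLet (m + 6) (m + 6)) (P1 := P1) (P3 := P3)
    (α := -((k : ℤ) + 3)) (β := -((k : ℤ) + 4)) (γ := (k : ℤ) + 4) (δ := (k : ℤ) + 3)
    (lgood_DLet _ _) (fun b hb => dl_last_neut _ (by omega) b (by have := hn b hb; omega))
    (by simp only [DLet, hi, if_false]; push_cast; split_ifs <;> omega)
    (by simp only [DLet, hi, if_false]; push_cast; split_ifs <;> omega)
    (by simp only [DLet, hi, if_false]; push_cast; split_ifs <;> omega)
    (by simp only [DLet, hi, if_false]; push_cast; split_ifs <;> omega)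
    (by simp only [DLet, hi, if_false]; push_cast; split_ifs <;> omega)
    (by simp only [DLet, hi, if_false]; push_cast; split_ifs <;> omega)
    (by simp only [DLet, hi, if_false]; push_cast; split_ifs <;> omega)
    (by simp only [DLet, hi, if_false]; push_cast; split_ifs <;> omega)
    (by simp only [DLet, hi, if_false]; push_cast; split_ifs <;> first | omega | (congr 1 <;> omega))
    (by simp only [DLet, hi, if_false]; push_cast; split_ifs <;> first | omega | (congr 1 <;> omega))
    (by simp only [DLet, hi, if_false]; push_cast; split_ifs <;> first | omega | (congr 1 <;> omega))
    (by simp only [DLet, hi, if_false]; push_cast; split_ifs <;> first | omega | (congr 1 <;> omega))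
  have q1 := hv.1 ⟨k, by omega⟩
  have q2 := hv.1 ⟨k + 1, hk⟩
  have q3 := hv.2.1 ⟨k, by omega⟩
  have q4 := hv.2.1 ⟨k + 1, hk⟩
  have q5 : v.1 ⟨k + 1, hk⟩ = 0 ∨ v.2 ⟨k + 1, hk⟩ = 0 := by
    have := hv.2.2.2
    subst hkm; exact this
  have Hv := H v (fun _ _ _ => ⟨rfl, rfl⟩)
  have b1 : ¬ (k = k + 1) := by omega
  have b2 : ¬ (k + 1 = k) := by omega
  have hE : eRaw m (m + 4) v = if v.2 ⟨k + 1, hk⟩ = 0 then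
       (bump v.1 ⟨k + 1, hk⟩ 1, bump v.2 ⟨k, by omega⟩ (-1))
     else (bump v.1 ⟨k, by omega⟩ 1, bump v.2 ⟨k + 1, hk⟩ (-1)) := by
    subst hkm; exact eRaw_last m v
  have hF : fRaw m (m + 4) v = if 0 < v.1 ⟨k + 1, hk⟩ then
       (bump v.1 ⟨k + 1, hk⟩ (-1), bump v.2 ⟨k, by omega⟩ 1)
     else (bump v.1 ⟨k, by omega⟩ (-1), bump v.2 ⟨k + 1, hk⟩ 1) := by
    subst hkm; exact fRaw_last m v
  constructor
  · rw [eD, hE, Hv]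
    split_ifs with h1 h2 h2
    · have Hv' := H _ (ag3 m k hk v 1 (-1))
      simp only [bump_at, b1, b2, if_true, if_false] at Hv'
      rw [Option.map_some, Hv']
      have h3 := h2.2.1 ⟨k, by omega⟩
      simp only [bump_at, b1, b2, if_true, if_false] at h3
      have := (M (v.2 ⟨k, by omega⟩ + -1).toNat 0
        (v.1 ⟨k + 1, hk⟩).toNat (v.1 ⟨k, by omega⟩).toNat).2.1
      convert this using 3 <;> omega
    · have h3 : ¬ 0 < v.2 ⟨k, by omega⟩ := by
        intro h4; apply h2
        apply dmem_two m s k hk v _ hv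
          (ag3 m k hk v _ _) <;>
        simp only [bump_at, b1, b2, if_true, if_false] <;> omega
      have := (M 0 0 (v.1 ⟨k + 1, hk⟩).toNat (v.1 ⟨k, by omega⟩).toNat).2.2.1
      rw [Option.map_none]
      convert this using 3 <;> omega
    · have Hv' := H _ (ag4 m k hk v 1 (-1))
      simp only [bump_at, b1, b2, if_true, if_false] at Hv'
      rw [Option.map_some, Hv']
      have := (M (v.2 ⟨k, by omega⟩).toNat (v.2 ⟨k + 1, hk⟩ + -1).toNat
        0 (v.1 ⟨k, by omega⟩).toNat).1
      convert this using 3 <;> omega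
    · exfalso; apply h2
      apply dmem_two m s k hk v _ hv
          (ag4 m k hk v _ _) <;>
      simp only [bump_at, b1, b2, if_true, if_false] <;> omega
  · rw [fD, hF, Hv]
    split_ifs with h1 h2 h2
    · have Hv' := H _ (ag3 m k hk v (-1) 1)
      simp only [bump_at, b1, b2, if_true, if_false] at Hv'
      rw [Option.map_some, Hv']
      have := (M (v.2 ⟨k, by omega⟩).toNat 0
        (v.1 ⟨k + 1, hk⟩ + -1).toNat (v.1 ⟨k, by omega⟩).toNat).2.2.2.1
      convert this using 3 <;> omega
    · exfalso; apply h2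
      apply dmem_two m s k hk v _ hv
          (ag3 m k hk v _ _) <;>
      simp only [bump_at, b1, b2, if_true, if_false] <;> omega
    · have Hv' := H _ (ag4 m k hk v (-1) 1)
      simp only [bump_at, b1, b2, if_true, if_false] at Hv'
      rw [Option.map_some, Hv']
      have h3 := h2.1 ⟨k, by omega⟩
      simp only [bump_at, b1, b2, if_true, if_false] at h3
      have := (M (v.2 ⟨k, by omega⟩).toNat (v.2 ⟨k + 1, hk⟩).toNat
        0 (v.1 ⟨k, by omega⟩ + -1).toNat).2.2.2.2.1
      convert this using 3 <;> omega
    · have h3 : ¬ 0 < v.1 ⟨k, by omega⟩ := by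
        intro h4; apply h2
        apply dmem_two m s k hk v _ hv
          (ag4 m k hk v _ _) <;>
        simp only [bump_at, b1, b2, if_true, if_false] <;> omega
      have := (M (v.2 ⟨k, by omega⟩).toNat (v.2 ⟨k + 1, hk⟩).toNat 0 0).2.2.2.2.2
      rw [Option.map_none]
      convert this using 3 <;> omega

end Helpers

/-- For `n > 5` (here `n = N+6`), the map `i_s` from the
`A₁^{(1)} ⊕ D_{n−2}^{(1)}`-crystal `B̂^{1,s} × B^{1,s}` to `(B^{2,1})^{⊗s}`
intertwines the crystal operators: `ẽ₁^A` and `f̃₁^A` with `ẽ₁, f̃₁`, and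
`ẽ_i^D, f̃_i^D` with `ẽ_{i+2}, f̃_{i+2}` for `1 ≤ i ≤ n−2`. -/
theorem is_intertwines (N s : ℕ) (hs : 1 ≤ s) :
    ∀ (j : ℕ), j ≤ s → ∀ v : DV N, DMem N s v →
      (wE (DLet (N + 6) 1) (isFlat N s j v) =
        if j < s then some (isFlat N s (j + 1) v) else none) ∧
      (wF (DLet (N + 6) 1) (isFlat N s j v) =
        if 0 < j then some (isFlat N s (j - 1) v) else none) ∧
      (∀ i, 1 ≤ i → i ≤ N + 4 →
        wE (DLet (N + 6) (i + 2)) (isFlat N s j v) = (eD N s i v).map (isFlat N s j) ∧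
        wF (DLet (N + 6) (i + 2)) (isFlat N s j v) = (fD N s i v).map (isFlat N s j)) := by
  intro j hj v hv
  have hlen := ww_length N s v hv
  have hcl : (ww N v).length =
      (List.replicate (s - j) (2 : ℤ) ++ List.replicate j (1 : ℤ)).length := by
    simp; omega
  have hA := lgood_DLet (N + 6) 1
  have h16 : 1 < N + 6 := by omega
  have e2 : (DLet (N + 6) 1).eps 2 = 1 := by simp [DLet]
  have p2 : (DLet (N + 6) 1).phi 2 = 0 := by simp [DLet]
  have e1 : (DLet (N + 6) 1).eps 1 = 0 := by simp [DLet]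
  have p1 : (DLet (N + 6) 1).phi 1 = 1 := by simp [DLet]
  have x2 : (DLet (N + 6) 1).e 2 = some 1 := by simp [DLet]
  have y1 : (DLet (N + 6) 1).f 1 = some 2 := by simp [DLet]
  obtain ⟨-, i1, i2⟩ := il_left hA (List.replicate (s - j) (2 : ℤ) ++ List.replicate j (1 : ℤ))
    (ww N v) hcl (fun b hb => dl_mid_neut _ _ h16 b (by have := ww_mem N v b hb; omega))
  have r2 := fun n => rep_eps (A := DLet (N + 6) 1) n 2 e2 p2
  have r1 := fun n => rep_phi (A := DLet (N + 6) 1) n 1 e1 p1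
  refine ⟨?_, ?_, ?_⟩
  · rw [isFlat_eq, i1]
    split_ifs with h
    · obtain ⟨t, ht⟩ : ∃ t, s - j = t + 1 := ⟨s - j - 1, by omega⟩
      have ht' : s - (j + 1) = t := by omega
      rw [isFlat_eq, ht, ht', rep_split, wE_at _ _ 2 1 x2 e2 p2 (r2 t).2.le (r1 j).1.le,
        List.replicate_succ (n := j)]
      rfl
    · rw [wE_none hA]
      · rfl
      · rw [wEps_append hA, (r2 _).1, (r2 _).2, (r1 _).1]; omega
  · rw [isFlat_eq, i2]
    split_ifs with h
    · obtain ⟨t, rfl⟩ : ∃ t, j = t + 1 := ⟨j - 1, by omega⟩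
      have ht' : s - (t + 1 - 1) = (s - (t + 1)) + 1 := by omega
      rw [isFlat_eq, ht', rep_split, List.replicate_succ (n := t),
        wF_at _ _ 1 2 y1 e1 p1 (r2 _).2.le (r1 t).1.le]
      rfl
    · rw [wF_none hA]
      · rfl
      · rw [wPhi_append hA, (r1 _).1, (r2 _).2, (r1 _).2]; omega
  · intro i hi1 hi2
    have hB := lgood_DLet (N + 6) (i + 2)
    obtain ⟨-, j1, j2⟩ := il_right hB (ww N v)
      (List.replicate (s - j) (2 : ℤ) ++ List.replicate j (1 : ℤ)) hcl (by
        intro c hc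
        have hc' : c = 2 ∨ c = 1 := by
          simp only [List.mem_append, List.mem_replicate] at hc
          omega
        by_cases hi : i + 2 < N + 6
        · exact dl_mid_neut _ _ hi c (by omega)
        · rw [show i + 2 = N + 6 by omega]
          exact dl_last_neut _ (by omega) c (by omega))
    have key : wE (DLet (N + 6) (i + 2)) (ww N v) = (eD N s i v).map (ww N) ∧
        wF (DLet (N + 6) (i + 2)) (ww N v) = (fD N s i v).map (ww N) := by
      by_cases hi : i + 2 < N + 6
      · obtain ⟨k, rfl⟩ : ∃ k, i = k + 1 := ⟨i - 1, by omega⟩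
        exact mid_E N s k (by omega) v hv
      · obtain rfl : i = N + 4 := by omega
        exact last_E N s (N + 2) rfl v hv
    rw [isFlat_eq, j1, j2, key.1, key.2, Option.map_map, Option.map_map]
    exact ⟨rfl, rfl⟩
end
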